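/- arXiv:2502.16042 — 3 statements merged into one kernel-verified Lean document; each statement's English description precedes it below -/
import Mathlib

section
/- (Asymptotic normality under a vanishing perturbation of the identity.) Fix K ≥ 2 and an arm k. Consider for each n a matrix Σ⁽ⁿ⁾ in the correlation elliptope with ‖Σ⁽ⁿ⁾ − I_n‖_op → 0, potential outcome vectors Y⁽ⁿ⁾(k) ∈ ℝⁿ, and the Gaussianization T⁽ⁿ⁾ ~ N(0, Σ⁽ⁿ⁾), D_i = g(T_i). Define Ỹ(k) = f_k(I_n)^{−1/2} f_k(Σ⁽ⁿ⁾)^{1/2} Y(k) (f_k entrywise; f_k(I_n) = ((K−1)/K²) I_n). If (1) max_i Ỹ_i(k)²/n → 0, (2) n·Var(τ̂_k) = ((K−1)/n)‖Ỹ(k)‖² converges to a positive limit σ², and (3) ‖Y⁽ⁿ⁾(k)‖² ≤ nM for some M > 0 and all n, then √n (τ̂_k − τ_k) converges in distribution to N(0, σ²), where τ_k = (1/n)Σ_i Y_i(k) and τ̂_k = (K/n)Σ_i 1{D_i=k}Y_i(k). -/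
open MeasureTheory ProbabilityTheory Matrix Real Filter
open scoped BigOperators ENNReal NNReal Topology

noncomputable section

/-- The spectral (operator) norm of a square real matrix. -/
def opNorm {m : ℕ} (A : Matrix (Fin m) (Fin m) ℝ) : ℝ :=
  ‖(Matrix.toEuclideanCLM (𝕜 := ℝ) A : EuclideanSpace ℝ (Fin m) →L[ℝ] EuclideanSpace ℝ (Fin m))‖

/-- The standard normal CDF `Φ`. -/
def stdGaussianCDF (x : ℝ) : ℝ := (gaussianReal 0 1 (Set.Iic x)).toReal

/-- The set of values `t` mapped by the Gaussianization map `g` to arm `k`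
(arms are `0`-indexed: `k : Fin K` represents arm `k+1`; `q m = Φ⁻¹(m/K)`). -/
def armSet (q : ℕ → ℝ) (K : ℕ) (k : Fin K) : Set ℝ :=
  if k.val = 0 then Set.Iic (q 1)
  else if k.val = K - 1 then Set.Ioi (q (K - 1))
  else Set.Ioc (q k.val) (q (k.val + 1))

/-- The function `r_{i,j}(ρ)`. -/
def rfun (q : ℕ → ℝ) (i j : ℕ) (ρ : ℝ) : ℝ :=
  ∫ r in (0 : ℝ)..ρ,
    (2 * π * Real.sqrt (1 - r ^ 2))⁻¹ *
      Real.exp (-((q i ^ 2 + q j ^ 2 - 2 * r * q i * q j) / (2 * (1 - r ^ 2))))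

/-- The function `f_k` (arms `0`-indexed: `k : Fin K` represents arm `k+1`). -/
def fkfun (q : ℕ → ℝ) (K : ℕ) (k : Fin K) (ρ : ℝ) : ℝ :=
  if k.val = 0 then rfun q 1 1 ρ
  else if k.val = K - 1 then rfun q (K - 1) (K - 1) ρ
  else rfun q k.val k.val ρ + rfun q (k.val + 1) (k.val + 1) ρ
    - 2 * rfun q k.val (k.val + 1) ρ

lemma aux_charFun_pi {n : ℕ} (a : Fin n → ℝ) :
    ∫ z : Fin n → ℝ, Complex.exp (((∑ i, a i * z i : ℝ) : ℂ) * Complex.I)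
      ∂(Measure.pi fun _ : Fin n => gaussianReal 0 1)
      = Complex.exp (-((∑ i, a i ^ 2 : ℝ) : ℂ) / 2) := by
  have h : ∀ z : Fin n → ℝ, Complex.exp (((∑ i, a i * z i : ℝ) : ℂ) * Complex.I)
      = ∏ i, Complex.exp ((a i : ℂ) * (z i : ℂ) * Complex.I) := by
    intro z
    rw [← Complex.exp_sum]
    push_cast
    rw [Finset.sum_mul]
  simp_rw [h]
  rw [integral_fintype_prod_eq_prod (𝕜 := ℂ)
    (f := fun i (x : ℝ) => Complex.exp ((a i : ℂ) * (x : ℂ) * Complex.I))]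
  have h2 : ∀ i, ∫ x : ℝ, Complex.exp ((a i : ℂ) * (x : ℂ) * Complex.I) ∂(gaussianReal 0 1)
      = Complex.exp (-(a i : ℂ) ^ 2 / 2) := by
    intro i
    rw [← charFun_apply_real, charFun_gaussianReal]
    congr 1
    push_cast
    simp
    ring
  simp_rw [h2]
  rw [← Complex.exp_sum]
  congr 1
  push_cast
  rw [← Finset.sum_div, Finset.sum_neg_distrib]

lemma aux_law_eq {m n p : ℕ} (A : Matrix (Fin m) (Fin n) ℝ) (B : Matrix (Fin m) (Fin p) ℝ)
    (h : A * Aᵀ = B * Bᵀ) :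
    Measure.map (fun z => A *ᵥ z) (Measure.pi fun _ : Fin n => gaussianReal 0 1)
      = Measure.map (fun z => B *ᵥ z) (Measure.pi fun _ : Fin p => gaussianReal 0 1) := by
  have hmA : Measurable (fun z : Fin n → ℝ => A *ᵥ z) :=
    (Continuous.matrix_mulVec continuous_const continuous_id).measurable
  have hmB : Measurable (fun z : Fin p → ℝ => B *ᵥ z) :=
    (Continuous.matrix_mulVec continuous_const continuous_id).measurable
  have := Measure.isProbabilityMeasure_map (μ := Measure.pi fun _ : Fin n => gaussianReal 0 1)
    hmA.aemeasurable
  have := Measure.isProbabilityMeasure_map (μ := Measure.pi fun _ : Fin p => gaussianReal 0 1)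
    hmB.aemeasurable
  refine Measure.ext_of_charFunDual ?_
  funext L
  obtain ⟨w, hw⟩ : ∃ w : Fin m → ℝ, ∀ x, L x = w ⬝ᵥ x := by
    refine ⟨fun i => L (Pi.single i 1), fun x => ?_⟩
    conv_lhs => rw [← Finset.univ_sum_single x]
    rw [map_sum]
    refine Finset.sum_congr rfl fun i _ => ?_
    have : (Pi.single i (x i) : Fin m → ℝ) = x i • Pi.single i (1:ℝ) := by
      rw [← Pi.single_smul]; simp
    rw [this, map_smul, smul_eq_mul, mul_comm]
  have key : ∀ {k : ℕ} (C : Matrix (Fin m) (Fin k) ℝ),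
      charFunDual (Measure.map (fun z => C *ᵥ z) (Measure.pi fun _ : Fin k => gaussianReal 0 1)) L
      = Complex.exp (-((w ⬝ᵥ ((C * Cᵀ) *ᵥ w) : ℝ) : ℂ) / 2) := by
    intro k C
    have hmC : Measurable (fun z : Fin k → ℝ => C *ᵥ z) :=
      (Continuous.matrix_mulVec continuous_const continuous_id).measurable
    rw [charFunDual_apply, integral_map hmC.aemeasurable
      (by
        have : Continuous fun v : Fin m → ℝ => Complex.exp ((L v : ℂ) * Complex.I) := by fun_prop
        exact this.aestronglyMeasurable)]
    have e : ∀ z : Fin k → ℝ, L (C *ᵥ z) = ∑ i, (w ᵥ* C) i * z i := by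
      intro z
      rw [hw, dotProduct_mulVec]
      rfl
    simp_rw [e]
    rw [aux_charFun_pi]
    congr 4
    rw [← mulVec_mulVec, dotProduct_mulVec, mulVec_transpose]
    simp [dotProduct, sq]
  rw [key, key, h]

lemma aux_law_pair {n : ℕ} (u v : Fin n → ℝ) (hu : u ⬝ᵥ u = 1) (hv : v ⬝ᵥ v = 1)
    (F : ℝ → ℝ → ℝ) (hF : Measurable (Function.uncurry F)) :
    ∫ z, F (u ⬝ᵥ z) (v ⬝ᵥ z) ∂(Measure.pi fun _ : Fin n => gaussianReal 0 1)
    = ∫ p : ℝ × ℝ, F p.1 ((u ⬝ᵥ v) * p.1 + Real.sqrt (1 - (u ⬝ᵥ v) ^ 2) * p.2)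
      ∂((gaussianReal 0 1).prod (gaussianReal 0 1)) := by
  set ρ := u ⬝ᵥ v with hρ
  have hρ1 : ρ ^ 2 ≤ 1 := by
    have := Finset.sum_mul_sq_le_sq_mul_sq Finset.univ u v
    simp only [dotProduct] at hu hv hρ
    simp only [← sq] at hu hv
    rw [hu, hv, ← hρ] at this
    linarith
  have hs : Real.sqrt (1 - ρ ^ 2) * Real.sqrt (1 - ρ ^ 2) = 1 - ρ ^ 2 :=
    Real.mul_self_sqrt (by linarith)
  have hvu : v ⬝ᵥ u = ρ := by rw [dotProduct_comm]
  have law := aux_law_eq (Matrix.of ![u, v])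
    (Matrix.of ![![1, 0], ![ρ, Real.sqrt (1 - ρ ^ 2)]]) (by
      ext i j
      fin_cases i <;> fin_cases j <;>
        simp [Matrix.mul_apply, Fin.sum_univ_two]
      · exact hu
      · rfl
      · exact hvu
      · rw [hs]; change v ⬝ᵥ v = _; rw [hv]; ring)
  have hG : Measurable (fun x : Fin 2 → ℝ => F (x 0) (x 1)) :=
    hF.comp (Measurable.prodMk (measurable_pi_apply 0) (measurable_pi_apply 1))
  have hm1 : Measurable (fun z : Fin n → ℝ => (Matrix.of ![u, v]) *ᵥ z) :=
    (Continuous.matrix_mulVec continuous_const continuous_id).measurable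
  have hm2 : Measurable (fun z : Fin 2 → ℝ =>
      (Matrix.of ![![1, 0], ![ρ, Real.sqrt (1 - ρ ^ 2)]]) *ᵥ z) :=
    (Continuous.matrix_mulVec continuous_const continuous_id).measurable
  have e1 := integral_map (μ := Measure.pi fun _ : Fin n => gaussianReal 0 1) hm1.aemeasurable
    (f := fun x : Fin 2 → ℝ => F (x 0) (x 1)) hG.aestronglyMeasurable
  have e2 := integral_map (μ := Measure.pi fun _ : Fin 2 => gaussianReal 0 1) hm2.aemeasurable
    (f := fun x : Fin 2 → ℝ => F (x 0) (x 1)) hG.aestronglyMeasurable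
  rw [law, e2] at e1
  have e3 := (measurePreserving_finTwoArrow (gaussianReal 0 1)).integral_comp
    (MeasurableEquiv.measurableEmbedding _)
    (fun p : ℝ × ℝ => F p.1 (ρ * p.1 + Real.sqrt (1 - ρ ^ 2) * p.2))
  rw [← e3]
  refine Eq.trans ?_ (e1.symm.trans ?_)
  · rfl
  · refine integral_congr_ae (Eventually.of_forall fun z => ?_)
    simp [mulVec, dotProduct, Fin.sum_univ_two, MeasurableEquiv.finTwoArrow]


lemma aux_pdf (x : ℝ) : gaussianPDFReal 0 1 x = (Real.sqrt (2 * π))⁻¹ * Real.exp (-(x ^ 2 / 2)) := by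
  simp [gaussianPDFReal, neg_div]

lemma aux_pdf_le (x : ℝ) : gaussianPDFReal 0 1 x ≤ 1 := by
  rw [aux_pdf]
  have h1 : (1 : ℝ) ≤ Real.sqrt (2 * π) := by
    rw [Real.one_le_sqrt]
    nlinarith [Real.pi_gt_three]
  have h2 : (Real.sqrt (2 * π))⁻¹ ≤ 1 := inv_le_one_of_one_le₀ h1
  have h3 : Real.exp (-(x ^ 2 / 2)) ≤ 1 := Real.exp_le_one_iff.2 (by nlinarith [sq_nonneg x])
  have h4 : 0 ≤ Real.exp (-(x ^ 2 / 2)) := (Real.exp_pos _).le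
  calc _ ≤ 1 * Real.exp (-(x ^ 2 / 2)) := mul_le_mul_of_nonneg_right h2 h4
    _ ≤ 1 := by linarith

lemma aux_pdf_cont : Continuous (gaussianPDFReal 0 1) := by
  have : gaussianPDFReal 0 1 = fun x => (Real.sqrt (2 * π))⁻¹ * Real.exp (-(x ^ 2 / 2)) := by
    funext x; exact aux_pdf x
  rw [this]
  fun_prop

lemma aux_cdf_eq (x : ℝ) : stdGaussianCDF x = ∫ t in Set.Iic x, gaussianPDFReal 0 1 t := by
  unfold stdGaussianCDF
  rw [gaussianReal_apply_eq_integral 0 one_ne_zero, ENNReal.toReal_ofReal]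
  exact integral_nonneg fun t => gaussianPDFReal_nonneg _ _ _

lemma aux_cdf_deriv (x : ℝ) : HasDerivAt stdGaussianCDF (gaussianPDFReal 0 1 x) x := by
  have hi := integrable_gaussianPDFReal 0 1
  have h : stdGaussianCDF = fun y => stdGaussianCDF 0 + ∫ t in (0:ℝ)..y, gaussianPDFReal 0 1 t := by
    funext y
    rw [← intervalIntegral.integral_Iic_sub_Iic hi.integrableOn hi.integrableOn,
      aux_cdf_eq, aux_cdf_eq]
    ring
  rw [h]
  refine HasDerivAt.const_add _ ?_
  exact intervalIntegral.integral_hasDerivAt_right (hi.intervalIntegrable)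
    (aux_pdf_cont.stronglyMeasurableAtFilter _ _) aux_pdf_cont.continuousAt

lemma aux_cdf_cont : Continuous stdGaussianCDF :=
  continuous_iff_continuousAt.2 fun x => (aux_cdf_deriv x).continuousAt

lemma aux_cdf_nonneg (x : ℝ) : 0 ≤ stdGaussianCDF x := ENNReal.toReal_nonneg

lemma aux_cdf_le (x : ℝ) : stdGaussianCDF x ≤ 1 := by
  unfold stdGaussianCDF
  exact ENNReal.toReal_le_of_le_ofReal zero_le_one (by simpa using prob_le_one)

/-- bivariate normal density -/
def dens (a b r : ℝ) : ℝ :=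
  (2 * π * Real.sqrt (1 - r ^ 2))⁻¹ *
      Real.exp (-((a ^ 2 + b ^ 2 - 2 * r * a * b) / (2 * (1 - r ^ 2))))

/-- the argument of the conditional cdf -/
def warg (b ρ x : ℝ) : ℝ := (b - ρ * x) / Real.sqrt (1 - ρ ^ 2)

def wder (b ρ x : ℝ) : ℝ := (ρ * b - x) / ((1 - ρ ^ 2) * Real.sqrt (1 - ρ ^ 2))

lemma aux_sq_lt {ρ : ℝ} (h : |ρ| < 1) : 0 < 1 - ρ ^ 2 := by
  have := (sq_lt_one_iff_abs_lt_one ρ).2 h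
  linarith

lemma aux_warg_deriv (b x : ℝ) {ρ : ℝ} (h : |ρ| < 1) :
    HasDerivAt (fun r => warg b r x) (wder b ρ x) ρ := by
  have h0 := aux_sq_lt h
  have hs : 0 < Real.sqrt (1 - ρ ^ 2) := Real.sqrt_pos.2 h0
  have h1 : HasDerivAt (fun r : ℝ => 1 - r ^ 2) (-(2 * ρ)) ρ := by
    simpa using (hasDerivAt_pow 2 ρ).const_sub 1
  have h2 := h1.sqrt h0.ne'
  have h3 : HasDerivAt (fun r : ℝ => b - r * x) (-x) ρ := by
    simpa using ((hasDerivAt_id ρ).mul_const x).const_sub b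
  have h4 := h3.div h2 hs.ne'
  refine h4.congr_deriv ?_
  unfold wder
  have hss := Real.sq_sqrt h0.le
  field_simp
  rw [hss]
  ring

lemma aux_prod_pdf (b x : ℝ) {ρ : ℝ} (h : |ρ| < 1) :
    gaussianPDFReal 0 1 x * gaussianPDFReal 0 1 (warg b ρ x) = Real.sqrt (1 - ρ ^ 2) * dens x b ρ := by
  have h0 := aux_sq_lt h
  have hs : 0 < Real.sqrt (1 - ρ ^ 2) := Real.sqrt_pos.2 h0
  rw [aux_pdf, aux_pdf]
  unfold dens warg
  have e : -(x ^ 2 / 2) + -(((b - ρ * x) / Real.sqrt (1 - ρ ^ 2)) ^ 2 / 2)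
    = -((x ^ 2 + b ^ 2 - 2 * ρ * x * b) / (2 * (1 - ρ ^ 2))) := by
    rw [div_pow, Real.sq_sqrt h0.le]
    field_simp
    ring
  rw [← e, Real.exp_add]
  have h2 : Real.sqrt (2 * π) * Real.sqrt (2 * π) = 2 * π := Real.mul_self_sqrt (by positivity)
  have h3 : (Real.sqrt (2 * π))⁻¹ * (Real.sqrt (2 * π))⁻¹ = (2 * π)⁻¹ := by rw [← mul_inv, h2]
  have h4 : Real.sqrt (1 - ρ ^ 2) * (2 * π * Real.sqrt (1 - ρ ^ 2))⁻¹ = (2 * π)⁻¹ := by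
    field_simp
  rw [← mul_assoc (Real.sqrt (1 - ρ ^ 2)), h4, ← h3]
  ring

lemma aux_dens_deriv (b x : ℝ) {ρ : ℝ} (h : |ρ| < 1) :
    HasDerivAt (fun y => dens y b ρ)
      (gaussianPDFReal 0 1 x * (gaussianPDFReal 0 1 (warg b ρ x) * wder b ρ x)) x := by
  have h0 := aux_sq_lt h
  have hs : 0 < Real.sqrt (1 - ρ ^ 2) := Real.sqrt_pos.2 h0
  rw [← mul_assoc, aux_prod_pdf b x h]
  have h1 : HasDerivAt (fun y : ℝ => -((y ^ 2 + b ^ 2 - 2 * ρ * y * b) / (2 * (1 - ρ ^ 2))))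
      (-((2 * x - 2 * ρ * b) / (2 * (1 - ρ ^ 2)))) x := by
    have a1 : HasDerivAt (fun y : ℝ => y ^ 2 + b ^ 2 - 2 * ρ * y * b) (2 * x - 2 * ρ * b) x := by
      have e1 : HasDerivAt (fun y : ℝ => y ^ 2 + b ^ 2) (2 * x) x := by
        simpa using (hasDerivAt_pow 2 x).add_const (b ^ 2)
      have e2 : HasDerivAt (fun y : ℝ => 2 * ρ * y * b) (2 * ρ * b) x := by
        simpa using ((hasDerivAt_id x).const_mul (2 * ρ)).mul_const b
      exact e1.sub e2
    exact (a1.div_const _).neg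
  have h2 := (h1.exp).const_mul ((2 * π * Real.sqrt (1 - ρ ^ 2))⁻¹)
  refine h2.congr_deriv ?_
  unfold dens wder
  field_simp
  ring

lemma aux_dens_nonneg (a b r : ℝ) : 0 ≤ dens a b r := by
  unfold dens
  positivity

lemma aux_dens_tendsto (b : ℝ) {ρ : ℝ} (h : |ρ| < 1) :
    Tendsto (fun y => dens y b ρ) atBot (𝓝 0) := by
  have h0 := aux_sq_lt h
  have hs : 0 < Real.sqrt (1 - ρ ^ 2) := Real.sqrt_pos.2 h0
  have hpdf : Tendsto (fun x => (Real.sqrt (1 - ρ ^ 2))⁻¹ * gaussianPDFReal 0 1 x) atBot (𝓝 0) := by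
    have e : (fun x => (Real.sqrt (1 - ρ ^ 2))⁻¹ * gaussianPDFReal 0 1 x)
        = fun x => ((Real.sqrt (1 - ρ ^ 2))⁻¹ * (Real.sqrt (2 * π))⁻¹) * Real.exp (-(x * x / 2)) := by
      funext x; rw [aux_pdf]; ring_nf
    rw [e, ← mul_zero ((Real.sqrt (1 - ρ ^ 2))⁻¹ * (Real.sqrt (2 * π))⁻¹)]
    refine Tendsto.const_mul _ ?_
    refine Real.tendsto_exp_neg_atTop_nhds_zero.comp ?_
    exact (tendsto_id.atBot_mul_atBot₀ tendsto_id).atTop_div_const (by norm_num)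
  refine squeeze_zero (fun y => aux_dens_nonneg _ _ _) (fun y => ?_) hpdf
  have := aux_prod_pdf b y h
  have e : dens y b ρ = (Real.sqrt (1 - ρ ^ 2))⁻¹ *
      (gaussianPDFReal 0 1 y * gaussianPDFReal 0 1 (warg b ρ y)) := by
    rw [this]; field_simp
  rw [e]
  refine mul_le_mul_of_nonneg_left ?_ (by positivity)
  exact mul_le_of_le_one_right (gaussianPDFReal_nonneg _ _ _) (aux_pdf_le _)

/-- conditional form of the bivariate cdf -/
def Gc (a b ρ : ℝ) : ℝ := ∫ x in Set.Iic a, stdGaussianCDF (warg b ρ x) ∂(gaussianReal 0 1)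

lemma aux_Gc_deriv (a b : ℝ) {ρ : ℝ} (h : |ρ| < 1) : HasDerivAt (Gc a b) (dens a b ρ) ρ := by
  set r0 := (1 + |ρ|) / 2 with hr0
  have hr1 : |ρ| < r0 := by rw [hr0]; linarith
  have hr2 : r0 < 1 := by rw [hr0]; linarith
  have hr3 : 0 ≤ r0 := by rw [hr0]; positivity
  have hr0' : 0 < 1 - r0 ^ 2 := by nlinarith
  set C := (1 - r0 ^ 2) * Real.sqrt (1 - r0 ^ 2) with hC
  have hCpos : 0 < C := mul_pos hr0' (Real.sqrt_pos.2 hr0')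
  have hwc : ∀ r, Continuous (fun x => warg b r x) := by
    intro r; unfold warg; fun_prop
  have key := hasDerivAt_integral_of_dominated_loc_of_deriv_le
    (μ := (gaussianReal 0 1).restrict (Set.Iic a)) (x₀ := ρ)
    (F := fun r x => stdGaussianCDF (warg b r x))
    (F' := fun r x => gaussianPDFReal 0 1 (warg b r x) * wder b r x)
    (s := {r : ℝ | |r| < r0}) (bound := fun x => (|b| + |x|) / C)
    ((isOpen_lt continuous_abs continuous_const).mem_nhds hr1)
    (Eventually.of_forall fun r => (aux_cdf_cont.comp (hwc r)).aestronglyMeasurable)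
    (by
      refine Integrable.of_bound (aux_cdf_cont.comp (hwc ρ)).aestronglyMeasurable 1 ?_
      refine Eventually.of_forall fun x => ?_
      rw [Real.norm_eq_abs, abs_of_nonneg (aux_cdf_nonneg _)]
      exact aux_cdf_le _)
    (by
      have : Continuous fun x => gaussianPDFReal 0 1 (warg b ρ x) * wder b ρ x := by
        refine (aux_pdf_cont.comp (hwc ρ)).mul ?_
        unfold wder; fun_prop
      exact this.aestronglyMeasurable)
    (by
      refine Eventually.of_forall fun x r hr => ?_
      have hr : |r| < r0 := hr
      have hrr : r ^ 2 ≤ r0 ^ 2 := by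
        rw [← sq_abs r]; exact pow_le_pow_left₀ (abs_nonneg _) hr.le 2
      rw [norm_mul, Real.norm_eq_abs, Real.norm_eq_abs, abs_of_nonneg (gaussianPDFReal_nonneg _ _ _)]
      refine (mul_le_of_le_one_left (abs_nonneg _) (aux_pdf_le _)).trans ?_
      unfold wder
      rw [abs_div]
      have hCle : C ≤ |(1 - r ^ 2) * Real.sqrt (1 - r ^ 2)| := by
        refine le_trans ?_ (le_abs_self _)
        rw [hC]
        have : Real.sqrt (1 - r0 ^ 2) ≤ Real.sqrt (1 - r ^ 2) := Real.sqrt_le_sqrt (by linarith)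
        refine mul_le_mul (by linarith) this (Real.sqrt_nonneg _) (by linarith)
      refine div_le_div₀ (by positivity) ?_ hCpos hCle
      refine (abs_sub _ _).trans ?_
      rw [abs_mul]
      have : |r| * |b| ≤ 1 * |b| := mul_le_mul_of_nonneg_right (by linarith) (abs_nonneg _)
      linarith)
    (by
      refine Integrable.integrableOn ?_
      have : Integrable (fun x : ℝ => x) (gaussianReal 0 1) :=
        (memLp_id_gaussianReal 1).integrable (by simp)
      exact ((integrable_const _).add this.abs).div_const _)
    (by
      refine Eventually.of_forall fun x r hr => ?_
      have hr : |r| < r0 := hr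
      exact (aux_cdf_deriv _).comp r (aux_warg_deriv b x (hr.trans hr2)))
  obtain ⟨hint, hder⟩ := key
  refine hder.congr_deriv ?_
  have hg : gaussianReal 0 1 = volume.withDensity (gaussianPDF 0 1) :=
    gaussianReal_of_var_ne_zero 0 one_ne_zero
  have hint2 : IntegrableOn (fun x => gaussianPDFReal 0 1 x *
      (gaussianPDFReal 0 1 (warg b ρ x) * wder b ρ x)) (Set.Iic a) := by
    rw [hg, restrict_withDensity measurableSet_Iic,
      integrable_withDensity_iff_integrable_smul' (measurable_gaussianPDF 0 1)
      (Eventually.of_forall fun x => gaussianPDF_lt_top)] at hint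
    simpa [toReal_gaussianPDF, IntegrableOn] using hint
  have e : ∫ x in Set.Iic a, gaussianPDFReal 0 1 (warg b ρ x) * wder b ρ x ∂(gaussianReal 0 1)
      = ∫ x in Set.Iic a, gaussianPDFReal 0 1 x *
      (gaussianPDFReal 0 1 (warg b ρ x) * wder b ρ x) := by
    rw [← integral_indicator measurableSet_Iic, ← integral_indicator measurableSet_Iic,
      integral_gaussianReal_eq_integral_smul one_ne_zero]
    refine integral_congr_ae (Eventually.of_forall fun x => ?_)
    by_cases hx : x ∈ Set.Iic a <;> simp [hx]
  rw [e, integral_Iic_of_hasDerivAt_of_tendsto' (fun x _ => aux_dens_deriv b x h) hint2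
    (aux_dens_tendsto b h), sub_zero]


/-- real-valued indicator of `(-∞, a]` -/
def ind (a x : ℝ) : ℝ := if x ≤ a then 1 else 0

lemma ind_nonneg (a x : ℝ) : 0 ≤ ind a x := by unfold ind; split_ifs <;> norm_num

lemma ind_le (a x : ℝ) : ind a x ≤ 1 := by unfold ind; split_ifs <;> norm_num

lemma ind_meas (a : ℝ) : Measurable (ind a) :=
  Measurable.ite measurableSet_Iic measurable_const measurable_const

lemma ind_eq (a : ℝ) : ind a = Set.indicator (Set.Iic a) 1 := by
  funext x
  by_cases h : x ≤ a <;> simp [ind, h]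

lemma ind_integral (a : ℝ) : ∫ x, ind a x ∂(gaussianReal 0 1) = stdGaussianCDF a := by
  rw [ind_eq, integral_indicator_one measurableSet_Iic]
  rfl

/-- bivariate cdf with correlation `ρ` -/
def Gp (a b ρ : ℝ) : ℝ :=
  ∫ p : ℝ × ℝ, ind a p.1 * ind b (ρ * p.1 + Real.sqrt (1 - ρ ^ 2) * p.2)
    ∂((gaussianReal 0 1).prod (gaussianReal 0 1))

lemma Gp_meas (a b ρ : ℝ) : Measurable fun p : ℝ × ℝ =>
    ind a p.1 * ind b (ρ * p.1 + Real.sqrt (1 - ρ ^ 2) * p.2) :=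
  ((ind_meas a).comp measurable_fst).mul ((ind_meas b).comp (by fun_prop))

lemma Gp_bound (a b ρ : ℝ) (p : ℝ × ℝ) :
    ‖ind a p.1 * ind b (ρ * p.1 + Real.sqrt (1 - ρ ^ 2) * p.2)‖ ≤ 1 := by
  rw [Real.norm_eq_abs, abs_of_nonneg (mul_nonneg (ind_nonneg _ _) (ind_nonneg _ _))]
  exact mul_le_one₀ (ind_le _ _) (ind_nonneg _ _) (ind_le _ _)

lemma Gp_int (a b ρ : ℝ) : Integrable (fun p : ℝ × ℝ =>
    ind a p.1 * ind b (ρ * p.1 + Real.sqrt (1 - ρ ^ 2) * p.2))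
    ((gaussianReal 0 1).prod (gaussianReal 0 1)) :=
  Integrable.of_bound (Gp_meas a b ρ).aestronglyMeasurable 1
    (Eventually.of_forall fun p => Gp_bound a b ρ p)

lemma Gp_eq_Gc (a b : ℝ) {ρ : ℝ} (h : |ρ| < 1) : Gp a b ρ = Gc a b ρ := by
  have h0 := aux_sq_lt h
  have hs : 0 < Real.sqrt (1 - ρ ^ 2) := Real.sqrt_pos.2 h0
  unfold Gp Gc
  rw [integral_prod _ (Gp_int a b ρ), ← integral_indicator measurableSet_Iic]
  refine integral_congr_ae (Eventually.of_forall fun x => ?_)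
  simp only
  rw [integral_const_mul]
  have e : ∀ y, ind b (ρ * x + Real.sqrt (1 - ρ ^ 2) * y) = ind (warg b ρ x) y := by
    intro y
    unfold ind warg
    refine if_congr ?_ rfl rfl
    rw [le_div_iff₀ hs]
    constructor <;> intro h <;> linarith
  simp_rw [e]
  rw [ind_integral]
  by_cases hx : x ≤ a <;> simp [ind, hx]

lemma Gc_zero (a b : ℝ) : Gc a b 0 = stdGaussianCDF a * stdGaussianCDF b := by
  unfold Gc
  have : ∀ x, warg b 0 x = b := by intro x; simp [warg]
  simp_rw [this]
  rw [setIntegral_const]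
  rfl

lemma Gp_tendsto (a b : ℝ) : Tendsto (Gp a b) (𝓝[<] 1) (𝓝 (Gp a b 1)) := by
  unfold Gp
  refine tendsto_integral_filter_of_dominated_convergence (fun _ => 1)
    (Eventually.of_forall fun ρ => (Gp_meas a b ρ).aestronglyMeasurable)
    (Eventually.of_forall fun ρ => Eventually.of_forall fun p => Gp_bound a b ρ p)
    (integrable_const _) ?_
  have hne : ∀ᵐ p ∂((gaussianReal 0 1).prod (gaussianReal 0 1)), p.1 ≠ b := by
    have : ∀ᵐ x ∂(gaussianReal 0 1), x ≠ b := by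
      have := nullSingletonClass_gaussianReal (μ := 0) (v := 1) one_ne_zero
      rw [ae_iff]
      simp
    exact Measure.quasiMeasurePreserving_fst.ae this
  filter_upwards [hne] with p hp
  refine Tendsto.const_mul _ ?_
  have hc : Tendsto (fun ρ : ℝ => ρ * p.1 + Real.sqrt (1 - ρ ^ 2) * p.2) (𝓝[<] 1)
      (𝓝 p.1) := by
    have : Continuous (fun ρ : ℝ => ρ * p.1 + Real.sqrt (1 - ρ ^ 2) * p.2) := by fun_prop
    have := (this.tendsto 1).mono_left (nhdsWithin_le_nhds (s := Set.Iio 1))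
    simpa using this
  have e1 : (1:ℝ) * p.1 + Real.sqrt (1 - 1 ^ 2) * p.2 = p.1 := by simp
  rw [e1]
  refine tendsto_const_nhds.congr' ?_
  rcases lt_or_gt_of_ne hp with h | h
  · filter_upwards [hc.eventually (gt_mem_nhds h)] with ρ hρ
    simp [ind, h.le, hρ.le]
  · filter_upwards [hc.eventually (lt_mem_nhds h)] with ρ hρ
    simp [ind, not_le.2 h, not_le.2 hρ]

lemma rfun_eq_dens (q : ℕ → ℝ) (i j : ℕ) (ρ : ℝ) :
    rfun q i j ρ = ∫ r in (0:ℝ)..ρ, dens (q i) (q j) r := rfl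

lemma rfun_eq_of_lt (q : ℕ → ℝ) (i j : ℕ) {ρ : ℝ} (h : |ρ| < 1) :
    rfun q i j ρ = Gp (q i) (q j) ρ - stdGaussianCDF (q i) * stdGaussianCDF (q j) := by
  have hd : ∀ x ∈ Set.uIcc 0 ρ, HasDerivAt (Gc (q i) (q j)) (dens (q i) (q j) x) x := by
    intro x hx
    refine aux_Gc_deriv _ _ ?_
    have := Set.abs_sub_left_of_mem_uIcc hx
    simp only [sub_zero] at this
    exact this.trans_lt h
  rw [rfun_eq_dens, Gp_eq_Gc _ _ h, ← Gc_zero]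
  refine intervalIntegral.integral_eq_sub_of_hasDerivAt hd ?_
  refine intervalIntegral.intervalIntegrable_deriv_of_nonneg (g := Gc (q i) (q j))
    (fun x hx => (hd x hx).continuousAt.continuousWithinAt) (fun x hx => hd x ?_)
    (fun x _ => aux_dens_nonneg _ _ _)
  exact Set.Ioo_subset_Icc_self hx

lemma rfun_one (q : ℕ → ℝ) (i j : ℕ) :
    rfun q i j 1 = Gp (q i) (q j) 1 - stdGaussianCDF (q i) * stdGaussianCDF (q j) := by
  have hd : ∀ x ∈ Set.Ico (0:ℝ) 1, HasDerivAt (Gp (q i) (q j)) (dens (q i) (q j) x) x := by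
    intro x hx
    have hx1 : |x| < 1 := by rw [abs_of_nonneg hx.1]; exact hx.2
    refine (aux_Gc_deriv (q i) (q j) hx1).congr_of_eventuallyEq ?_
    filter_upwards [(isOpen_lt continuous_abs continuous_const).mem_nhds hx1] with y hy
    exact Gp_eq_Gc _ _ hy
  have hc : ContinuousOn (Gp (q i) (q j)) (Set.Icc 0 1) := by
    intro x hx
    rcases hx.2.lt_or_eq with h | h
    · exact (hd x ⟨hx.1, h⟩).continuousAt.continuousWithinAt
    · subst h
      have h1 : ContinuousWithinAt (Gp (q i) (q j)) (Set.Iic 1) 1 := by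
        rw [← continuousWithinAt_Iio_iff_Iic]
        exact Gp_tendsto _ _
      exact h1.mono Set.Icc_subset_Iic_self
  rw [rfun_eq_dens, ← Gc_zero, ← Gp_eq_Gc _ _ (by simp)]
  refine intervalIntegral.integral_eq_sub_of_hasDerivAt_of_le zero_le_one hc
    (fun x hx => hd x ⟨hx.1.le, hx.2⟩) ?_
  refine intervalIntegral.intervalIntegrable_deriv_of_nonneg (g := Gp (q i) (q j))
    (by simpa using hc) (fun x hx => hd x ?_)
    (fun x _ => aux_dens_nonneg _ _ _)
  simp at hx
  exact ⟨hx.1.le, hx.2⟩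

lemma rfun_eq (q : ℕ → ℝ) (i j : ℕ) {ρ : ℝ} (h : -1 < ρ) (h' : ρ ≤ 1) :
    rfun q i j ρ = Gp (q i) (q j) ρ - stdGaussianCDF (q i) * stdGaussianCDF (q j) := by
  rcases h'.lt_or_eq with h1 | h1
  · exact rfun_eq_of_lt q i j (abs_lt.2 ⟨h, h1⟩)
  · rw [h1]; exact rfun_one q i j

lemma rfun_tendsto (q : ℕ → ℝ) (i j : ℕ) :
    Tendsto (rfun q i j) (𝓝[≤] 1) (𝓝 (rfun q i j 1)) := by
  have h : ContinuousWithinAt (rfun q i j) (Set.Iic 1) 1 := by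
    rw [← continuousWithinAt_Iio_iff_Iic]
    unfold ContinuousWithinAt
    rw [rfun_one]
    refine ((Gp_tendsto (q i) (q j)).sub_const _).congr' ?_
    have : Set.Ioo (-1:ℝ) 1 ∈ 𝓝[<] (1:ℝ) := Ioo_mem_nhdsLT (by norm_num)
    filter_upwards [this] with ρ hρ
    exact (rfun_eq q i j hρ.1 hρ.2.le).symm
  exact h

lemma rfun_symm (q : ℕ → ℝ) (i j : ℕ) (ρ : ℝ) : rfun q i j ρ = rfun q j i ρ := by
  unfold rfun
  congr 1
  funext r
  ring_nf

/-- quadratic Taylor bound at zero -/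
lemma rfun_taylor (q : ℕ → ℝ) (i j : ℕ) :
    ∃ α C : ℝ, 0 ≤ C ∧ ∀ ρ, |ρ| ≤ 1 / 2 → |rfun q i j ρ - α * ρ| ≤ C * ρ ^ 2 := by
  set g := dens (q i) (q j) with hg
  have hcd : ContDiffOn ℝ 1 g (Set.Icc (-(1/2)) (1/2)) := by
    rw [hg]
    unfold dens
    intro x hx
    have h0 : 1 - x ^ 2 ≠ 0 := by nlinarith [hx.1, hx.2]
    have hs : Real.sqrt (1 - x ^ 2) ≠ 0 := by
      rw [Real.sqrt_ne_zero']; nlinarith [hx.1, hx.2]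
    refine ContDiffAt.contDiffWithinAt ?_
    have hp : ContDiffAt ℝ 1 (fun x : ℝ => 1 - x ^ 2) x := by fun_prop
    refine ContDiffAt.mul ?_ ?_
    · refine ContDiffAt.inv ?_ ?_
      · exact contDiffAt_const.mul (hp.sqrt h0)
      · have := Real.pi_pos.ne'
        positivity
    · refine ContDiffAt.exp ?_
      refine ContDiffAt.neg ?_
      refine ContDiffAt.div (by fun_prop) (by fun_prop) ?_
      simpa using h0
  obtain ⟨Kl, hL⟩ := hcd.exists_lipschitzOnWith (by norm_num) (convex_Icc _ _) isCompact_Icc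
  refine ⟨g 0, Kl, Kl.2, fun ρ hρ => ?_⟩
  rw [rfun_eq_dens]
  have hsub : Set.uIcc 0 ρ ⊆ Set.Icc (-(1/2)) (1/2) := by
    intro x hx
    have := Set.abs_sub_left_of_mem_uIcc hx
    simp only [sub_zero] at this
    have h2 := abs_le.1 (this.trans hρ)
    exact ⟨h2.1, h2.2⟩
  have hgi : IntervalIntegrable g volume 0 ρ := (hcd.continuousOn.mono hsub).intervalIntegrable
  have e : (∫ r in (0:ℝ)..ρ, dens (q i) (q j) r) - g 0 * ρ = ∫ r in (0:ℝ)..ρ, (g r - g 0) := by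
    rw [intervalIntegral.integral_sub hgi intervalIntegrable_const]
    simp [hg, mul_comm]
  rw [e]
  have := intervalIntegral.norm_integral_le_of_norm_le_const (a := 0) (b := ρ)
    (f := fun r => g r - g 0) (C := Kl * |ρ|) (by
      intro x hx
      have hx' := Set.uIoc_subset_uIcc hx
      have h1 := hL.dist_le_mul x (hsub hx') 0 (by norm_num)
      rw [Real.dist_eq, Real.dist_eq, sub_zero] at h1
      refine h1.trans (mul_le_mul_of_nonneg_left ?_ Kl.2)
      have := Set.abs_sub_left_of_mem_uIcc hx'
      simpa using this)
  refine this.trans (le_of_eq ?_)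
  rw [sub_zero, mul_assoc, abs_mul_abs_self, sq]


lemma int_fun_sub {α : Type*} {m : MeasurableSpace α} {μ : Measure α} {f g : α → ℝ}
    (hf : Integrable f μ) (hg : Integrable g μ) : Integrable (fun x => f x - g x) μ := hf.sub hg

/-- centred arm indicator -/
def hfun (q : ℕ → ℝ) (K : ℕ) (k : Fin K) (x : ℝ) : ℝ :=
  (armSet q K k).indicator 1 x - 1 / K

lemma armSet_meas (q : ℕ → ℝ) (K : ℕ) (k : Fin K) : MeasurableSet (armSet q K k) := by
  unfold armSet
  split_ifs
  · exact measurableSet_Iic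
  · exact measurableSet_Ioi
  · exact measurableSet_Ioc

lemma hfun_meas (q : ℕ → ℝ) (K : ℕ) (k : Fin K) : Measurable (hfun q K k) :=
  (measurable_one.indicator (armSet_meas q K k)).sub_const _

lemma hfun_bound (q : ℕ → ℝ) (K : ℕ) (hK : 2 ≤ K) (k : Fin K) (x : ℝ) : |hfun q K k x| ≤ 1 := by
  have hK' : (2:ℝ) ≤ K := by exact_mod_cast hK
  have h1 : 0 ≤ (1:ℝ) / K := by positivity
  have h2 : (1:ℝ) / K ≤ 1 := by rw [div_le_one (by linarith)]; linarith
  unfold hfun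
  by_cases h : x ∈ armSet q K k
  · simp only [h, Set.indicator_of_mem, Pi.one_apply]
    rw [abs_le]; constructor <;> linarith
  · simp only [h, Set.indicator_of_notMem, not_false_eq_true]
    rw [abs_le]; constructor <;> linarith

lemma aux_cdf_mono : Monotone stdGaussianCDF := by
  intro a b hab
  unfold stdGaussianCDF
  exact ENNReal.toReal_mono (measure_ne_top _ _) (measure_mono (Set.Iic_subset_Iic.2 hab))

lemma arm_decomp (K : ℕ) (hK : 2 ≤ K) (k : Fin K) (q : ℕ → ℝ)
    (hq : ∀ m : ℕ, 0 < m → m < K → stdGaussianCDF (q m) = (m : ℝ) / K) :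
    ∃ (α β : ℝ) (a b : ℕ),
      (∀ x, hfun q K k x = α * (ind (q a) x - stdGaussianCDF (q a))
        + β * (ind (q b) x - stdGaussianCDF (q b))) ∧
      (∀ ρ, fkfun q K k ρ = α ^ 2 * rfun q a a ρ + β ^ 2 * rfun q b b ρ
        + 2 * α * β * rfun q a b ρ) := by
  have hK0 : (K:ℝ) ≠ 0 := by positivity
  by_cases h0 : k.val = 0
  · refine ⟨1, 0, 1, 1, fun x => ?_, fun ρ => ?_⟩
    · rw [hq 1 one_pos (by omega)]
      unfold hfun armSet ind
      rw [if_pos h0]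
      by_cases h : x ≤ q 1 <;> simp [h]
    · unfold fkfun
      rw [if_pos h0]
      ring
  by_cases h1 : k.val = K - 1
  · refine ⟨-1, 0, K - 1, 1, fun x => ?_, fun ρ => ?_⟩
    · rw [hq (K - 1) (by omega) (by omega)]
      unfold hfun armSet ind
      rw [if_neg h0, if_pos h1, Nat.cast_sub (by omega)]
      by_cases h : x ≤ q (K - 1)
      · have h' : x ∉ Set.Ioi (q (K - 1)) := by simpa using h
        simp only [h', Set.indicator_of_notMem, not_false_eq_true, h, if_true]
        field_simp
        push_cast
        ring
      · have h' : x ∈ Set.Ioi (q (K - 1)) := by simpa using h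
        simp only [h', Set.indicator_of_mem, h, if_false, Pi.one_apply]
        field_simp
        push_cast
        ring
    · unfold fkfun
      rw [if_neg h0, if_pos h1]
      ring
  · have hk := k.2
    have hle : q k.val ≤ q (k.val + 1) := by
      by_contra hcon
      push Not at hcon
      have := aux_cdf_mono hcon.le
      rw [hq _ (by omega) (by omega), hq _ (by omega) (by omega)] at this
      rw [div_le_div_iff_of_pos_right (by positivity)] at this
      push_cast at this
      linarith
    refine ⟨-1, 1, k.val, k.val + 1, fun x => ?_, fun ρ => ?_⟩
    · rw [hq k.val (by omega) (by omega), hq (k.val + 1) (by omega) (by omega)]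
      unfold hfun armSet ind
      rw [if_neg h0, if_neg h1]
      have hx : x ∈ Set.Ioc (q k.val) (q (k.val + 1)) ↔ ¬ x ≤ q k.val ∧ x ≤ q (k.val + 1) := by
        simp
      by_cases h : x ≤ q k.val
      · have h2 : x ≤ q (k.val + 1) := h.trans hle
        have h' : x ∉ Set.Ioc (q k.val) (q (k.val + 1)) := by rw [hx]; tauto
        simp only [h', Set.indicator_of_notMem, not_false_eq_true, h, h2, if_true]
        field_simp
        push_cast
        ring
      · by_cases h2 : x ≤ q (k.val + 1)
        · have h' : x ∈ Set.Ioc (q k.val) (q (k.val + 1)) := by rw [hx]; tauto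
          simp only [h', Set.indicator_of_mem, h, h2, if_true, if_false, Pi.one_apply]
          field_simp
          push_cast
          ring
        · have h' : x ∉ Set.Ioc (q k.val) (q (k.val + 1)) := by rw [hx]; tauto
          simp only [h', Set.indicator_of_notMem, not_false_eq_true, h, h2, if_false]
          field_simp
          push_cast
          ring
    · unfold fkfun
      rw [if_neg h0, if_neg h1]
      ring

abbrev stdG (n : ℕ) : Measure (Fin n → ℝ) := Measure.pi fun _ : Fin n => gaussianReal 0 1

lemma dot_meas {n : ℕ} (u : Fin n → ℝ) : Measurable fun z : Fin n → ℝ => u ⬝ᵥ z := by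
  unfold dotProduct
  fun_prop

lemma law_single {n : ℕ} (u : Fin n → ℝ) (hu : u ⬝ᵥ u = 1) (F : ℝ → ℝ) (hF : Measurable F) :
    ∫ z, F (u ⬝ᵥ z) ∂(stdG n) = ∫ x, F x ∂(gaussianReal 0 1) := by
  rw [aux_law_pair u u hu hu (fun x _ => F x) (hF.comp measurable_fst)]
  have := (measurePreserving_fst (μ := gaussianReal 0 1) (ν := gaussianReal 0 1))
  rw [← this.map_eq, integral_map measurable_fst.aemeasurable hF.aestronglyMeasurable]
  rw [this.map_eq]

lemma cov_ind {n : ℕ} (u v : Fin n → ℝ) (hu : u ⬝ᵥ u = 1) (hv : v ⬝ᵥ v = 1)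
    (h : -1 < u ⬝ᵥ v) (q : ℕ → ℝ) (i j : ℕ) :
    ∫ z, (ind (q i) (u ⬝ᵥ z) - stdGaussianCDF (q i)) * (ind (q j) (v ⬝ᵥ z) - stdGaussianCDF (q j))
      ∂(stdG n) = rfun q i j (u ⬝ᵥ v) := by
  have h1 : u ⬝ᵥ v ≤ 1 := by
    have := Finset.sum_mul_sq_le_sq_mul_sq Finset.univ u v
    simp only [dotProduct] at hu hv ⊢
    simp only [← sq] at hu hv
    rw [hu, hv] at this
    nlinarith
  rw [rfun_eq q i j h h1]
  have hb : ∀ (w : Fin n → ℝ) (a : ℝ), Integrable (fun z => ind a (w ⬝ᵥ z)) (stdG n) := by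
    intro w a
    refine Integrable.of_bound ((ind_meas a).comp (dot_meas w)).aestronglyMeasurable 1
      (Eventually.of_forall fun z => ?_)
    rw [Real.norm_eq_abs, abs_of_nonneg (ind_nonneg _ _)]
    exact ind_le _ _
  have hbb : Integrable (fun z => ind (q i) (u ⬝ᵥ z) * ind (q j) (v ⬝ᵥ z)) (stdG n) := by
    refine Integrable.of_bound (((ind_meas _).comp (dot_meas u)).mul
      ((ind_meas _).comp (dot_meas v))).aestronglyMeasurable 1
      (Eventually.of_forall fun z => ?_)
    rw [Real.norm_eq_abs, abs_of_nonneg (mul_nonneg (ind_nonneg _ _) (ind_nonneg _ _))]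
    exact mul_le_one₀ (ind_le _ _) (ind_nonneg _ _) (ind_le _ _)
  have e : ∀ z, (ind (q i) (u ⬝ᵥ z) - stdGaussianCDF (q i)) *
      (ind (q j) (v ⬝ᵥ z) - stdGaussianCDF (q j))
      = ind (q i) (u ⬝ᵥ z) * ind (q j) (v ⬝ᵥ z) - stdGaussianCDF (q j) * ind (q i) (u ⬝ᵥ z)
        - (stdGaussianCDF (q i) * ind (q j) (v ⬝ᵥ z)
        - stdGaussianCDF (q i) * stdGaussianCDF (q j)) := by
    intro z; ring
  simp_rw [e]
  rw [integral_sub (int_fun_sub hbb ((hb u _).const_mul _)) (int_fun_sub ((hb v _).const_mul _)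
    (integrable_const _)), integral_sub hbb ((hb u _).const_mul _),
    integral_sub ((hb v _).const_mul _) (integrable_const _),
    integral_const_mul, integral_const_mul, integral_const,
    law_single u hu _ (ind_meas _), law_single v hv _ (ind_meas _), ind_integral, ind_integral,
    aux_law_pair u v hu hv (fun x y => ind (q i) x * ind (q j) y)
      (((ind_meas _).comp measurable_fst).mul ((ind_meas _).comp measurable_snd))]
  unfold Gp
  simp
  ring

lemma cov_h {n : ℕ} (u v : Fin n → ℝ) (hu : u ⬝ᵥ u = 1) (hv : v ⬝ᵥ v = 1)
    (h : -1 < u ⬝ᵥ v) (K : ℕ) (hK : 2 ≤ K) (k : Fin K) (q : ℕ → ℝ)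
    (hq : ∀ m : ℕ, 0 < m → m < K → stdGaussianCDF (q m) = (m : ℝ) / K) :
    ∫ z, hfun q K k (u ⬝ᵥ z) * hfun q K k (v ⬝ᵥ z) ∂(stdG n) = fkfun q K k (u ⬝ᵥ v) := by
  obtain ⟨α, β, a, b, h1, h2⟩ := arm_decomp K hK k q hq
  have hint : ∀ i j : ℕ, Integrable (fun z => (ind (q i) (u ⬝ᵥ z) - stdGaussianCDF (q i)) *
      (ind (q j) (v ⬝ᵥ z) - stdGaussianCDF (q j))) (stdG n) := by
    intro i j
    refine Integrable.of_bound ((((ind_meas _).comp (dot_meas u)).sub_const _).mul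
      (((ind_meas _).comp (dot_meas v)).sub_const _)).aestronglyMeasurable 1
      (Eventually.of_forall fun z => ?_)
    rw [norm_mul]
    have : ∀ a x, ‖ind a x - stdGaussianCDF a‖ ≤ 1 := by
      intro a x
      rw [Real.norm_eq_abs, abs_le]
      constructor <;> linarith [ind_nonneg a x, ind_le a x, aux_cdf_nonneg a, aux_cdf_le a]
    exact mul_le_one₀ (this _ _) (norm_nonneg _) (this _ _)
  have e : ∀ z, hfun q K k (u ⬝ᵥ z) * hfun q K k (v ⬝ᵥ z) =
      (α ^ 2 * ((ind (q a) (u ⬝ᵥ z) - stdGaussianCDF (q a)) *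
      (ind (q a) (v ⬝ᵥ z) - stdGaussianCDF (q a))) +
      β ^ 2 * ((ind (q b) (u ⬝ᵥ z) - stdGaussianCDF (q b)) *
      (ind (q b) (v ⬝ᵥ z) - stdGaussianCDF (q b)))) +
      (α * β * ((ind (q a) (u ⬝ᵥ z) - stdGaussianCDF (q a)) *
      (ind (q b) (v ⬝ᵥ z) - stdGaussianCDF (q b))) +
      α * β * ((ind (q b) (u ⬝ᵥ z) - stdGaussianCDF (q b)) *
      (ind (q a) (v ⬝ᵥ z) - stdGaussianCDF (q a)))) := by
    intro z; rw [h1, h1]; ring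
  simp_rw [e]
  rw [integral_add (((hint a a).const_mul _).fun_add ((hint b b).const_mul _))
    (((hint a b).const_mul _).fun_add ((hint b a).const_mul _)),
    integral_add ((hint a a).const_mul _) ((hint b b).const_mul _),
    integral_add ((hint a b).const_mul _) ((hint b a).const_mul _),
    integral_const_mul, integral_const_mul, integral_const_mul, integral_const_mul,
    cov_ind u v hu hv h, cov_ind u v hu hv h, cov_ind u v hu hv h, cov_ind u v hu hv h,
    rfun_symm q b a, h2]
  ring

lemma hfun_integrable (q : ℕ → ℝ) (K : ℕ) (hK : 2 ≤ K) (k : Fin K) :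
    Integrable (hfun q K k) (gaussianReal 0 1) :=
  Integrable.of_bound (hfun_meas q K k).aestronglyMeasurable 1
    (Eventually.of_forall fun x => hfun_bound q K hK k x)

lemma hfun_mean (K : ℕ) (hK : 2 ≤ K) (k : Fin K) (q : ℕ → ℝ)
    (hq : ∀ m : ℕ, 0 < m → m < K → stdGaussianCDF (q m) = (m : ℝ) / K) :
    ∫ x, hfun q K k x ∂(gaussianReal 0 1) = 0 := by
  obtain ⟨α, β, a, b, h1, h2⟩ := arm_decomp K hK k q hq
  have hb : ∀ a, Integrable (ind a) (gaussianReal 0 1) := fun a =>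
    Integrable.of_bound (ind_meas a).aestronglyMeasurable 1 (Eventually.of_forall fun x => by
      rw [Real.norm_eq_abs, abs_of_nonneg (ind_nonneg _ _)]; exact ind_le _ _)
  simp_rw [h1]
  rw [integral_add ((int_fun_sub (hb _) (integrable_const _)).const_mul _)
    ((int_fun_sub (hb _) (integrable_const _)).const_mul _), integral_const_mul, integral_const_mul,
    integral_sub (hb _) (integrable_const _), integral_sub (hb _) (integrable_const _),
    ind_integral, ind_integral]
  simp

lemma hfun_sq (K : ℕ) (hK : 2 ≤ K) (k : Fin K) (q : ℕ → ℝ)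
    (hq : ∀ m : ℕ, 0 < m → m < K → stdGaussianCDF (q m) = (m : ℝ) / K) :
    ∫ x, hfun q K k x ^ 2 ∂(gaussianReal 0 1) = ((K:ℝ) - 1) / K ^ 2 := by
  have hK0 : (K:ℝ) ≠ 0 := by positivity
  have e : ∀ x, hfun q K k x ^ 2 = (1 - 2 / K) * hfun q K k x + ((K:ℝ) - 1) / K ^ 2 := by
    intro x
    unfold hfun
    by_cases h : x ∈ armSet q K k
    · simp only [h, Set.indicator_of_mem, Pi.one_apply]
      field_simp
      ring
    · simp only [h, Set.indicator_of_notMem, not_false_eq_true]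
      field_simp
      ring
  simp_rw [e]
  rw [integral_add ((hfun_integrable q K hK k).const_mul _) (integrable_const _),
    integral_const_mul, hfun_mean K hK k q hq]
  simp

lemma fk_one (K : ℕ) (hK : 2 ≤ K) (k : Fin K) (q : ℕ → ℝ)
    (hq : ∀ m : ℕ, 0 < m → m < K → stdGaussianCDF (q m) = (m : ℝ) / K) :
    fkfun q K k 1 = ((K:ℝ) - 1) / K ^ 2 := by
  have hu : (fun _ : Fin 1 => (1:ℝ)) ⬝ᵥ (fun _ : Fin 1 => (1:ℝ)) = 1 := by simp [dotProduct]
  have := cov_h (fun _ : Fin 1 => (1:ℝ)) (fun _ : Fin 1 => (1:ℝ)) hu hu (by rw [hu]; norm_num)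
    K hK k q hq
  rw [hu] at this
  rw [← this, ← hfun_sq K hK k q hq,
    ← law_single _ hu (fun x => hfun q K k x ^ 2) ((hfun_meas q K k).pow_const 2)]
  simp only [sq]

lemma fk_zero (K : ℕ) (k : Fin K) (q : ℕ → ℝ) : fkfun q K k 0 = 0 := by
  simp [fkfun, rfun]

lemma fk_tendsto (K : ℕ) (hK : 2 ≤ K) (k : Fin K) (q : ℕ → ℝ)
    (hq : ∀ m : ℕ, 0 < m → m < K → stdGaussianCDF (q m) = (m : ℝ) / K) :
    Tendsto (fkfun q K k) (𝓝[≤] 1) (𝓝 (((K:ℝ) - 1) / K ^ 2)) := by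
  obtain ⟨α, β, a, b, h1, h2⟩ := arm_decomp K hK k q hq
  rw [← fk_one K hK k q hq]
  have e : fkfun q K k = fun ρ => α ^ 2 * rfun q a a ρ + β ^ 2 * rfun q b b ρ
        + 2 * α * β * rfun q a b ρ := by funext ρ; exact h2 ρ
  rw [e]
  exact (((rfun_tendsto q a a).const_mul _).add ((rfun_tendsto q b b).const_mul _)).add
    ((rfun_tendsto q a b).const_mul _)

lemma fk_taylor (K : ℕ) (hK : 2 ≤ K) (k : Fin K) (q : ℕ → ℝ)
    (hq : ∀ m : ℕ, 0 < m → m < K → stdGaussianCDF (q m) = (m : ℝ) / K) :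
    ∃ c C : ℝ, 0 ≤ C ∧ ∀ ρ, |ρ| ≤ 1 / 2 → |fkfun q K k ρ - c * ρ| ≤ C * ρ ^ 2 := by
  obtain ⟨α, β, a, b, h1, h2⟩ := arm_decomp K hK k q hq
  obtain ⟨c1, C1, p1, t1⟩ := rfun_taylor q a a
  obtain ⟨c2, C2, p2, t2⟩ := rfun_taylor q b b
  obtain ⟨c3, C3, p3, t3⟩ := rfun_taylor q a b
  refine ⟨α ^ 2 * c1 + β ^ 2 * c2 + 2 * α * β * c3,
    α ^ 2 * C1 + β ^ 2 * C2 + |2 * α * β| * C3, by positivity, fun ρ hρ => ?_⟩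
  rw [h2]
  have e : α ^ 2 * rfun q a a ρ + β ^ 2 * rfun q b b ρ + 2 * α * β * rfun q a b ρ
      - (α ^ 2 * c1 + β ^ 2 * c2 + 2 * α * β * c3) * ρ
      = α ^ 2 * (rfun q a a ρ - c1 * ρ) + β ^ 2 * (rfun q b b ρ - c2 * ρ)
      + 2 * α * β * (rfun q a b ρ - c3 * ρ) := by ring
  rw [e]
  refine (abs_add_three _ _ _).trans ?_
  rw [abs_mul, abs_mul, abs_mul (2 * α * β), abs_of_nonneg (sq_nonneg α),
    abs_of_nonneg (sq_nonneg β)]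
  have a1 := mul_le_mul_of_nonneg_left (t1 ρ hρ) (sq_nonneg α)
  have a2 := mul_le_mul_of_nonneg_left (t2 ρ hρ) (sq_nonneg β)
  have a3 := mul_le_mul_of_nonneg_left (t3 ρ hρ) (abs_nonneg (2 * α * β))
  linarith


lemma opNorm_nonneg' {m : ℕ} (A : Matrix (Fin m) (Fin m) ℝ) : 0 ≤ opNorm A := norm_nonneg _

lemma opNorm_add_le' {m : ℕ} (A B : Matrix (Fin m) (Fin m) ℝ) :
    opNorm (A + B) ≤ opNorm A + opNorm B := by
  unfold opNorm
  rw [map_add]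
  exact norm_add_le _ _

lemma opNorm_smul' {m : ℕ} (c : ℝ) (A : Matrix (Fin m) (Fin m) ℝ) :
    opNorm (c • A) = |c| * opNorm A := by
  unfold opNorm
  rw [map_smul, norm_smul, Real.norm_eq_abs]

lemma sum_sq_mulVec_le {m : ℕ} (A : Matrix (Fin m) (Fin m) ℝ) (x : Fin m → ℝ) :
    ∑ i, (A *ᵥ x) i ^ 2 ≤ opNorm A ^ 2 * ∑ i, x i ^ 2 := by
  have h := (Matrix.toEuclideanCLM (𝕜 := ℝ) A).le_opNorm (WithLp.toLp 2 x)
  rw [Matrix.toEuclideanCLM_toLp] at h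
  have h2 := pow_le_pow_left₀ (norm_nonneg _) h 2
  rw [mul_pow, EuclideanSpace.norm_sq_eq, EuclideanSpace.norm_sq_eq] at h2
  simpa [opNorm] using h2

lemma opNorm_le' {m : ℕ} (A : Matrix (Fin m) (Fin m) ℝ) {c : ℝ} (hc : 0 ≤ c)
    (h : ∀ x : Fin m → ℝ, ∑ i, (A *ᵥ x) i ^ 2 ≤ c ^ 2 * ∑ i, x i ^ 2) : opNorm A ≤ c := by
  refine ContinuousLinearMap.opNorm_le_bound _ hc fun x => ?_
  refine abs_le_of_sq_le_sq' ?_ (by positivity) |>.2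
  rw [mul_pow, EuclideanSpace.norm_sq_eq, EuclideanSpace.norm_sq_eq]
  have := h x.ofLp
  simpa using this

lemma quad_le {m : ℕ} (A : Matrix (Fin m) (Fin m) ℝ) (x : Fin m → ℝ) :
    |x ⬝ᵥ (A *ᵥ x)| ≤ opNorm A * ∑ i, x i ^ 2 := by
  have h1 := Finset.sum_mul_sq_le_sq_mul_sq Finset.univ x (A *ᵥ x)
  have h2 := sum_sq_mulVec_le A x
  have h0 : 0 ≤ ∑ i, x i ^ 2 := Finset.sum_nonneg fun i _ => sq_nonneg _
  refine abs_le_of_sq_le_sq ?_ (mul_nonneg (opNorm_nonneg' A) h0)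
  refine h1.trans ?_
  calc _ ≤ (∑ i, x i ^ 2) * (opNorm A ^ 2 * ∑ i, x i ^ 2) := mul_le_mul_of_nonneg_left h2 h0
    _ = _ := by ring

lemma col_le {m : ℕ} (A : Matrix (Fin m) (Fin m) ℝ) (j : Fin m) :
    ∑ i, A i j ^ 2 ≤ opNorm A ^ 2 := by
  have := sum_sq_mulVec_le A (Pi.single j 1)
  simpa [Pi.single_apply] using this

lemma entry_le {m : ℕ} (A : Matrix (Fin m) (Fin m) ℝ) (i j : Fin m) :
    |A i j| ≤ opNorm A := by
  refine abs_le_of_sq_le_sq ?_ (opNorm_nonneg' A)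
  exact (Finset.single_le_sum (f := fun i => A i j ^ 2) (fun i _ => sq_nonneg _)
    (Finset.mem_univ i)).trans (col_le A j)

lemma schur_test {m : ℕ} (R : Matrix (Fin m) (Fin m) ℝ) {s : ℝ} (hs : 0 ≤ s)
    (h1 : ∀ i, ∑ j, |R i j| ≤ s) (h2 : ∀ j, ∑ i, |R i j| ≤ s) : opNorm R ≤ s := by
  refine opNorm_le' R hs fun x => ?_
  have a : ∀ i, (R *ᵥ x) i ^ 2 ≤ s * ∑ j, |R i j| * x j ^ 2 := by
    intro i
    have : (∑ j, R i j * x j) ^ 2 ≤ (∑ j, |R i j|) * ∑ j, |R i j| * x j ^ 2 := by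
      refine Finset.sum_sq_le_sum_mul_sum_of_sq_eq_mul _ (fun j _ => abs_nonneg _)
        (fun j _ => by positivity) (fun j _ => ?_)
      rw [mul_pow, ← sq_abs (R i j)]
      ring
    refine this.trans ?_
    exact mul_le_mul_of_nonneg_right (h1 i) (Finset.sum_nonneg fun j _ => by positivity)
  calc ∑ i, (R *ᵥ x) i ^ 2 ≤ ∑ i, s * ∑ j, |R i j| * x j ^ 2 := Finset.sum_le_sum fun i _ => a i
    _ = s * ∑ j, (∑ i, |R i j|) * x j ^ 2 := by
        rw [← Finset.mul_sum, Finset.sum_comm]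
        simp_rw [Finset.sum_mul]
    _ ≤ s * ∑ j, s * x j ^ 2 := by
        refine mul_le_mul_of_nonneg_left (Finset.sum_le_sum fun j _ => ?_) hs
        exact mul_le_mul_of_nonneg_right (h2 j) (sq_nonneg _)
    _ = _ := by rw [← Finset.mul_sum]; ring

lemma sqrt_close {m : ℕ} (B : Matrix (Fin m) (Fin m) ℝ) (hB : B.PosSemidef) :
    opNorm (B - 1) ≤ opNorm (B * B - 1) := by
  refine opNorm_le' _ (opNorm_nonneg' _) fun x => ?_
  refine le_trans ?_ (sum_sq_mulVec_le (B * B - 1) x)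
  set y := (B - 1) *ᵥ x with hy
  have e : (B * B - 1) *ᵥ x = B *ᵥ y + y := by
    rw [hy, mulVec_mulVec, ← add_mulVec]
    congr 1
    noncomm_ring
  rw [e]
  have h0 : 0 ≤ y ⬝ᵥ (B *ᵥ y) := by
    have := hB.dotProduct_mulVec_nonneg y
    simpa using this
  have : ∑ i, (B *ᵥ y + y) i ^ 2 = ∑ i, (B *ᵥ y) i ^ 2 + 2 * (y ⬝ᵥ (B *ᵥ y)) + ∑ i, y i ^ 2 := by
    unfold dotProduct
    rw [Finset.mul_sum, ← Finset.sum_add_distrib, ← Finset.sum_add_distrib]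
    refine Finset.sum_congr rfl fun i _ => ?_
    simp only [Pi.add_apply]
    ring
  rw [this]
  have h1 : 0 ≤ ∑ i, (B *ᵥ y) i ^ 2 := Finset.sum_nonneg fun i _ => sq_nonneg _
  linarith

lemma exists_sqrt {m : ℕ} (S : Matrix (Fin m) (Fin m) ℝ) (hS : S.PosSemidef) :
    ∃ B : Matrix (Fin m) (Fin m) ℝ, B.PosSemidef ∧ B * B = S := by
  open scoped MatrixOrder in
  exact ⟨CFC.sqrt S, (CFC.sqrt_nonneg S).posSemidef, CFC.sqrt_mul_sqrt_self S hS.nonneg⟩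

lemma entrywise_close (f : ℝ → ℝ) (v c C0 : ℝ) (hC0 : 0 ≤ C0)
    (ht : Tendsto f (𝓝[≤] 1) (𝓝 v))
    (hT : ∀ ρ, |ρ| ≤ 1 / 2 → |f ρ - c * ρ| ≤ C0 * ρ ^ 2) {η : ℝ} (hη : 0 < η) :
    ∃ δ > 0, ∀ (m : ℕ) (C : Matrix (Fin m) (Fin m) ℝ), Cᵀ = C → (∀ i, C i i ≤ 1) →
      opNorm (C - 1) ≤ δ → opNorm ((Matrix.of fun i j => f (C i j)) - v • 1) ≤ η := by
  have hev : ∀ᶠ ρ in 𝓝[≤] (1:ℝ), |f ρ - v| < η / 4 := by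
    have := Metric.tendsto_nhds.1 ht (η / 4) (by positivity)
    simpa [Real.dist_eq] using this
  rw [eventually_nhdsWithin_iff, Metric.eventually_nhds_iff] at hev
  obtain ⟨δ1, hδ1, hev⟩ := hev
  have hpos : 0 < 4 * (|c| + C0 + 1) := by positivity
  refine ⟨min (1 / 2) (min (δ1 / 2) (η / (4 * (|c| + C0 + 1)))), by positivity, ?_⟩
  intro m C hsym hdiag hop
  have d1 := hop.trans (min_le_left _ _)
  have d2 := hop.trans ((min_le_right _ _).trans (min_le_left _ _))
  have d3 := hop.trans ((min_le_right _ _).trans (min_le_right _ _))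
  set δ := opNorm (C - 1) with hδ
  have hδ0 : 0 ≤ δ := opNorm_nonneg' _
  rw [le_div_iff₀ hpos] at d3
  set E : Matrix (Fin m) (Fin m) ℝ :=
    (Matrix.of fun i j => f (C i j)) - v • 1 - c • (C - 1) with hE
  have hsum : (Matrix.of fun i j => f (C i j)) - v • (1 : Matrix (Fin m) (Fin m) ℝ)
      = c • (C - 1) + E := by rw [hE]; abel
  have hEb : ∀ i j, |E i j| ≤ (if i = j then η / 4 + |c| * δ else 0) + C0 * (C - 1) i j ^ 2 := by
    intro i j
    have hent := entry_le (C - 1) i j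
    rw [← hδ] at hent
    by_cases hij : i = j
    · subst hij
      have hx : |f (C i i) - v| < η / 4 := by
        refine hev ?_ (hdiag i)
        rw [Real.dist_eq]
        simp at hent
        linarith
      have e : E i i = (f (C i i) - v) - c * (C - 1) i i := by simp [hE]
      rw [e, if_pos rfl]
      have h1 := abs_sub (f (C i i) - v) (c * (C - 1) i i)
      rw [abs_mul] at h1
      have h2 := mul_le_mul_of_nonneg_left hent (abs_nonneg c)
      have h3 : 0 ≤ C0 * (C - 1) i i ^ 2 := by positivity
      linarith
    · have e1 : (C - 1) i j = C i j := by simp [hij]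
      have e : E i j = f (C i j) - c * C i j := by simp [hE, hij]
      rw [e1] at hent
      rw [e, if_neg hij, e1, zero_add]
      exact hT _ (hent.trans d1)
  have hCs : ∀ i j, (C - 1) i j = (C - 1) j i := by
    intro i j
    have : (C - 1)ᵀ = C - 1 := by rw [transpose_sub, hsym, transpose_one]
    conv_lhs => rw [← this]
    rfl
  have hEop : opNorm E ≤ η / 4 + |c| * δ + C0 * δ ^ 2 := by
    refine schur_test E (by positivity) (fun i => ?_) (fun j => ?_)
    · refine (Finset.sum_le_sum fun j _ => hEb i j).trans ?_
      rw [Finset.sum_add_distrib, ← Finset.mul_sum]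
      have := col_le (C - 1) i
      simp_rw [fun j => hCs j i] at this
      have := mul_le_mul_of_nonneg_left this hC0
      simp only [Finset.sum_ite_eq, Finset.mem_univ, if_true]
      linarith
    · refine (Finset.sum_le_sum fun i _ => hEb i j).trans ?_
      rw [Finset.sum_add_distrib, ← Finset.mul_sum]
      have := mul_le_mul_of_nonneg_left (col_le (C - 1) j) hC0
      simp only [Finset.sum_ite_eq', Finset.mem_univ, if_true]
      linarith
  rw [hsum]
  refine (opNorm_add_le' _ _).trans ?_
  rw [opNorm_smul']
  have : δ ^ 2 ≤ δ := by nlinarith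
  have := mul_le_mul_of_nonneg_left this hC0
  have := mul_nonneg (abs_nonneg c) hδ0
  nlinarith


lemma coupling_eq {n : ℕ} (B : Matrix (Fin n) (Fin n) ℝ) (hB : Bᵀ = B)
    (hd : ∀ i, (B * B) i i = 1) (hS1 : ∀ i j, -1 < (B * B) i j) (hB1 : ∀ i j, -1 < B i j)
    (K : ℕ) (hK : 2 ≤ K) (k : Fin K) (q : ℕ → ℝ)
    (hq : ∀ m : ℕ, 0 < m → m < K → stdGaussianCDF (q m) = (m : ℝ) / K) (Y : Fin n → ℝ) :
    ∫ z, (∑ i, Y i * (hfun q K k ((B *ᵥ z) i) - hfun q K k (z i))) ^ 2 ∂(stdG n) =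
      ∑ i, ∑ j, Y i * Y j * (fkfun q K k ((B * B) i j) - 2 * fkfun q K k (B i j)
        + fkfun q K k ((1 : Matrix (Fin n) (Fin n) ℝ) i j)) := by
  have hBs : ∀ i j, B i j = B j i := fun i j => by
    conv_lhs => rw [← hB]
    rfl
  have hrow : ∀ i j, B i ⬝ᵥ B j = (B * B) i j := by
    intro i j
    rw [Matrix.mul_apply]
    unfold dotProduct
    exact Finset.sum_congr rfl fun l _ => by rw [hBs j l]
  set e : Fin n → Fin n → ℝ := fun i => Pi.single i 1 with he
  have hez : ∀ i (z : Fin n → ℝ), e i ⬝ᵥ z = z i := fun i z => by simp [he]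
  have hBe : ∀ i j, B i ⬝ᵥ e j = B i j := fun i j => by simp [he]
  have heB : ∀ i j, e i ⬝ᵥ B j = B i j := fun i j => by rw [hez, hBs]
  have hee : ∀ i j, e i ⬝ᵥ e j = (1 : Matrix (Fin n) (Fin n) ℝ) i j := fun i j => by
    rw [hez]; simp [he, Pi.single_apply, Matrix.one_apply]
  have hint : ∀ u v : Fin n → ℝ,
      Integrable (fun z : Fin n → ℝ => hfun q K k (u ⬝ᵥ z) * hfun q K k (v ⬝ᵥ z)) (stdG n) := by
    intro u v
    refine Integrable.of_bound (C := 1) ?_ (ae_of_all _ fun z => ?_)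
    · exact (((hfun_meas q K k).comp (dot_meas u)).mul
        ((hfun_meas q K k).comp (dot_meas v))).aestronglyMeasurable
    · rw [norm_mul, Real.norm_eq_abs, Real.norm_eq_abs]
      exact mul_le_one₀ (hfun_bound q K hK k _) (abs_nonneg _) (hfun_bound q K hK k _)
  have hexp : ∀ z : Fin n → ℝ,
      (∑ i, Y i * (hfun q K k ((B *ᵥ z) i) - hfun q K k (z i))) ^ 2 =
      ∑ i, ∑ j, Y i * Y j * (hfun q K k (B i ⬝ᵥ z) * hfun q K k (B j ⬝ᵥ z)
        - hfun q K k (B i ⬝ᵥ z) * hfun q K k (e j ⬝ᵥ z)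
        - hfun q K k (e i ⬝ᵥ z) * hfun q K k (B j ⬝ᵥ z)
        + hfun q K k (e i ⬝ᵥ z) * hfun q K k (e j ⬝ᵥ z)) := by
    intro z
    rw [sq, Finset.sum_mul_sum]
    refine Finset.sum_congr rfl fun i _ => Finset.sum_congr rfl fun j _ => ?_
    rw [hez, hez]
    simp only [Matrix.mulVec]
    ring
  have hi : ∀ i j, Integrable (fun z : Fin n → ℝ =>
      Y i * Y j * (hfun q K k (B i ⬝ᵥ z) * hfun q K k (B j ⬝ᵥ z)
        - hfun q K k (B i ⬝ᵥ z) * hfun q K k (e j ⬝ᵥ z)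
        - hfun q K k (e i ⬝ᵥ z) * hfun q K k (B j ⬝ᵥ z)
        + hfun q K k (e i ⬝ᵥ z) * hfun q K k (e j ⬝ᵥ z))) (stdG n) := fun i j =>
    ((((hint _ _).sub (hint _ _)).sub (hint _ _)).add (hint _ _)).const_mul _
  have h4 : ∀ u v w x : Fin n → ℝ, ∫ z : Fin n → ℝ, (hfun q K k (u ⬝ᵥ z) * hfun q K k (v ⬝ᵥ z)
        - hfun q K k (u ⬝ᵥ z) * hfun q K k (x ⬝ᵥ z)
        - hfun q K k (w ⬝ᵥ z) * hfun q K k (v ⬝ᵥ z)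
        + hfun q K k (w ⬝ᵥ z) * hfun q K k (x ⬝ᵥ z)) ∂(stdG n) =
      ∫ z, hfun q K k (u ⬝ᵥ z) * hfun q K k (v ⬝ᵥ z) ∂(stdG n)
      - ∫ z, hfun q K k (u ⬝ᵥ z) * hfun q K k (x ⬝ᵥ z) ∂(stdG n)
      - ∫ z, hfun q K k (w ⬝ᵥ z) * hfun q K k (v ⬝ᵥ z) ∂(stdG n)
      + ∫ z, hfun q K k (w ⬝ᵥ z) * hfun q K k (x ⬝ᵥ z) ∂(stdG n) := by
    intro u v w x
    rw [integral_add (int_fun_sub (int_fun_sub (hint u v) (hint u x)) (hint w v)) (hint w x),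
      integral_sub (int_fun_sub (hint u v) (hint u x)) (hint w v),
      integral_sub (hint u v) (hint u x)]
  simp_rw [hexp]
  rw [integral_finsetSum _ fun i _ => integrable_finsetSum _ fun j _ => hi i j]
  refine Finset.sum_congr rfl fun i _ => ?_
  rw [integral_finsetSum _ fun j _ => hi i j]
  refine Finset.sum_congr rfl fun j _ => ?_
  rw [integral_const_mul, h4]
  have hBu : ∀ i, B i ⬝ᵥ B i = 1 := fun i => by rw [hrow, hd]
  have heu : ∀ i, e i ⬝ᵥ e i = 1 := fun i => by rw [hee]; simp
  have h1 : -1 < e i ⬝ᵥ e j := by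
    rw [hee, Matrix.one_apply]; split_ifs <;> norm_num
  rw [cov_h (B i) (B j) (hBu i) (hBu j) (by rw [hrow]; exact hS1 i j) K hK k q hq,
    cov_h (B i) (e j) (hBu i) (heu j) (by rw [hBe]; exact hB1 i j) K hK k q hq,
    cov_h (e i) (B j) (heu i) (hBu j) (by rw [heB]; exact hB1 i j) K hK k q hq,
    cov_h (e i) (e j) (heu i) (heu j) h1 K hK k q hq, hrow, hBe, heB, hee]
  ring

lemma coupling_le {n : ℕ} (B : Matrix (Fin n) (Fin n) ℝ) (hB : Bᵀ = B)
    (hd : ∀ i, (B * B) i i = 1) (hS1 : ∀ i j, -1 < (B * B) i j) (hB1 : ∀ i j, -1 < B i j)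
    (K : ℕ) (hK : 2 ≤ K) (k : Fin K) (q : ℕ → ℝ)
    (hq : ∀ m : ℕ, 0 < m → m < K → stdGaussianCDF (q m) = (m : ℝ) / K) (Y : Fin n → ℝ) (η : ℝ)
    (h1 : opNorm ((Matrix.of fun i j => fkfun q K k ((B * B) i j)) - (((K:ℝ)-1)/K^2) • 1) ≤ η)
    (h2 : opNorm ((Matrix.of fun i j => fkfun q K k (B i j)) - (((K:ℝ)-1)/K^2) • 1) ≤ η) :
    ∫ z, (∑ i, Y i * (hfun q K k ((B *ᵥ z) i) - hfun q K k (z i))) ^ 2 ∂(stdG n) ≤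
      3 * η * ∑ i, Y i ^ 2 := by
  rw [coupling_eq B hB hd hS1 hB1 K hK k q hq Y]
  set M1 := (Matrix.of fun i j => fkfun q K k ((B * B) i j)) - (((K:ℝ)-1)/K^2) • 1 with hM1
  set M2 := (Matrix.of fun i j => fkfun q K k (B i j)) - (((K:ℝ)-1)/K^2) • 1 with hM2
  have hf : ∀ i j, fkfun q K k ((1 : Matrix (Fin n) (Fin n) ℝ) i j) =
      (((K:ℝ)-1)/K^2) * (1 : Matrix (Fin n) (Fin n) ℝ) i j := by
    intro i j
    rw [Matrix.one_apply]
    split_ifs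
    · rw [fk_one K hK k q hq, mul_one]
    · rw [fk_zero, mul_zero]
  have : ∑ i, ∑ j, Y i * Y j * (fkfun q K k ((B * B) i j) - 2 * fkfun q K k (B i j)
        + fkfun q K k ((1 : Matrix (Fin n) (Fin n) ℝ) i j)) =
      Y ⬝ᵥ (M1 *ᵥ Y) - 2 * (Y ⬝ᵥ (M2 *ᵥ Y)) := by
    simp only [Matrix.mulVec, dotProduct, Finset.mul_sum]
    rw [← Finset.sum_sub_distrib]
    refine Finset.sum_congr rfl fun i _ => ?_
    rw [← Finset.sum_sub_distrib]
    refine Finset.sum_congr rfl fun j _ => ?_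
    rw [hf]
    simp only [hM1, hM2, Matrix.sub_apply, Matrix.of_apply, Matrix.smul_apply, smul_eq_mul]
    ring
  rw [this]
  have a1 := quad_le M1 Y
  have a2 := quad_le M2 Y
  have h0 : 0 ≤ ∑ i, Y i ^ 2 := Finset.sum_nonneg fun i _ => sq_nonneg _
  have b1 := mul_le_mul_of_nonneg_right h1 h0
  have b2 := mul_le_mul_of_nonneg_right h2 h0
  have c1 := abs_le.1 a1
  have c2 := abs_le.1 a2
  linarith [c1.1, c1.2, c2.1, c2.2]


lemma norm_prod_sub_prod_le' {ι : Type*} (s : Finset ι) (f g : ι → ℂ)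
    (hf : ∀ i, ‖f i‖ ≤ 1) (hg : ∀ i, ‖g i‖ ≤ 1) :
    ‖∏ i ∈ s, f i - ∏ i ∈ s, g i‖ ≤ ∑ i ∈ s, ‖f i - g i‖ := by
  classical
  induction s using Finset.induction_on with
  | empty => simp
  | insert a s ha ih =>
    rw [Finset.prod_insert ha, Finset.prod_insert ha, Finset.sum_insert ha]
    have hgp : ‖∏ i ∈ s, g i‖ ≤ 1 := by
      rw [norm_prod]
      exact Finset.prod_le_one (fun i _ => norm_nonneg _) fun i _ => hg i
    have e : f a * ∏ i ∈ s, f i - g a * ∏ i ∈ s, g i =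
        f a * (∏ i ∈ s, f i - ∏ i ∈ s, g i) + (f a - g a) * ∏ i ∈ s, g i := by ring
    rw [e]
    refine (norm_add_le _ _).trans ?_
    rw [norm_mul, norm_mul]
    have h1 := mul_le_mul (hf a) ih (norm_nonneg _) zero_le_one
    have h2 := mul_le_mul_of_nonneg_left hgp (norm_nonneg (f a - g a))
    linarith

lemma gauss_littleO : (fun s : ℝ => Complex.exp (-(s:ℂ) ^ 2 / 2) - (1 - (s:ℂ) ^ 2 / 2)) =o[𝓝 0]
    fun s : ℝ => s ^ 2 := by
  have h : Tendsto (fun s : ℝ => -(s:ℂ) ^ 2 / 2) (𝓝 0) (𝓝 0) := by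
    have : Continuous (fun s : ℝ => -(s:ℂ) ^ 2 / 2) := by fun_prop
    simpa using this.tendsto 0
  have hd := (Complex.hasDerivAt_exp 0)
  rw [hasDerivAt_iff_isLittleO] at hd
  have := hd.comp_tendsto h
  have h2 : (fun s : ℝ => -(s:ℂ) ^ 2 / 2 - 0) =O[𝓝 0] fun s : ℝ => s ^ 2 := by
    refine Asymptotics.IsBigO.of_bound 1 (Eventually.of_forall fun s => ?_)
    simp
    nlinarith [sq_nonneg s]
  refine (this.trans_isBigO h2).congr_left fun s => ?_
  simp
  ring

lemma lindeberg (φ : ℝ → ℂ) (hφ1 : ∀ s, ‖φ s‖ ≤ 1)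
    (hφ : (fun s : ℝ => φ s - (1 - (s:ℂ) ^ 2 / 2)) =o[𝓝 0] fun s : ℝ => s ^ 2)
    (a : ∀ n : ℕ, Fin n → ℝ) (hmax : ∀ ε > (0:ℝ), ∀ᶠ n in atTop, ∀ i, |a n i| < ε) (L : ℝ)
    (hsum : Tendsto (fun n => ∑ i, a n i ^ 2) atTop (𝓝 L)) :
    Tendsto (fun n => ∏ i, φ (a n i)) atTop (𝓝 (Complex.exp (-(L:ℂ) / 2))) := by
  have hg := hφ.sub gauss_littleO
  have hexp : Tendsto (fun n => ∏ i, Complex.exp (-((a n i : ℝ) : ℂ) ^ 2 / 2)) atTop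
      (𝓝 (Complex.exp (-(L:ℂ) / 2))) := by
    have e : ∀ n, ∏ i, Complex.exp (-((a n i : ℝ) : ℂ) ^ 2 / 2) =
        Complex.exp (-((∑ i, a n i ^ 2 : ℝ) : ℂ) / 2) := by
      intro n
      rw [← Complex.exp_sum]
      congr 1
      push_cast
      rw [← Finset.sum_neg_distrib, Finset.sum_div]
    simp_rw [e]
    have : Continuous fun x : ℝ => Complex.exp (-(x:ℂ) / 2) := by fun_prop
    exact (this.tendsto L).comp hsum
  rw [tendsto_iff_norm_sub_tendsto_zero]
  have hdiff : Tendsto (fun n => ‖∏ i, φ (a n i) - ∏ i, Complex.exp (-((a n i : ℝ) : ℂ) ^ 2 / 2)‖)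
      atTop (𝓝 0) := by
    rw [Metric.tendsto_nhds]
    intro ε hε
    have hL : (0:ℝ) < |L| + 1 := by positivity
    have h1 := hg.def (c := ε / 2 / (|L| + 1)) (by positivity)
    rw [Metric.eventually_nhds_iff] at h1
    obtain ⟨δ, hδ, h1⟩ := h1
    have h2 : ∀ᶠ n in atTop, ∑ i, a n i ^ 2 < |L| + 1 :=
      hsum.eventually_lt_const (by linarith [le_abs_self L])
    filter_upwards [hmax δ hδ, h2] with n hn1 hn2
    rw [Real.dist_eq, sub_zero, abs_norm]
    calc _ ≤ ∑ i, ‖φ (a n i) - Complex.exp (-((a n i : ℝ) : ℂ) ^ 2 / 2)‖ := by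
          refine norm_prod_sub_prod_le' _ _ _ (fun i => hφ1 _) fun i => ?_
          have : -((a n i : ℝ) : ℂ) ^ 2 / 2 = ((-(a n i) ^ 2 / 2 : ℝ) : ℂ) := by push_cast; ring
          rw [this, Complex.norm_exp_ofReal, Real.exp_le_one_iff]
          nlinarith [sq_nonneg (a n i)]
      _ ≤ ∑ i, ε / 2 / (|L| + 1) * a n i ^ 2 := by
          refine Finset.sum_le_sum fun i _ => ?_
          have := h1 (y := a n i) (by rw [Real.dist_eq, sub_zero]; exact hn1 i)
          simpa using this
      _ = ε / 2 / (|L| + 1) * ∑ i, a n i ^ 2 := by rw [Finset.mul_sum]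
      _ ≤ ε / 2 / (|L| + 1) * (|L| + 1) :=
          mul_le_mul_of_nonneg_left hn2.le (by positivity)
      _ = ε / 2 := by field_simp
      _ < ε := by linarith
  have h2 := tendsto_iff_norm_sub_tendsto_zero.1 hexp
  refine squeeze_zero (fun n => norm_nonneg _) (fun n => ?_) (by simpa using hdiff.add h2)
  exact norm_sub_le_norm_sub_add_norm_sub _ _ _

/-- characteristic function of the normalised arm indicator -/
def phi (q : ℕ → ℝ) (K : ℕ) (k : Fin K) (s : ℝ) : ℂ :=
  charFun ((gaussianReal 0 1).map (fun x => hfun q K k x / √(((K:ℝ)-1)/K^2))) s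

lemma vpos (K : ℕ) (hK : 2 ≤ K) : 0 < ((K:ℝ)-1)/K^2 := by
  have : (2:ℝ) ≤ K := by exact_mod_cast hK
  have : 0 < (K:ℝ) - 1 := by linarith
  positivity

lemma phi_taylor (K : ℕ) (hK : 2 ≤ K) (k : Fin K) (q : ℕ → ℝ)
    (hq : ∀ m : ℕ, 0 < m → m < K → stdGaussianCDF (q m) = (m : ℝ) / K) :
    (fun s : ℝ => phi q K k s - (1 - (s:ℂ) ^ 2 / 2)) =o[𝓝 0] fun s : ℝ => s ^ 2 := by
  have hv := vpos K hK
  refine taylor_charFun_two ((hfun_meas q K k).div_const _).aemeasurable ?_ ?_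
  · rw [integral_div, hfun_mean K hK k q hq, zero_div]
  · simp only [Pi.pow_apply, div_pow, Real.sq_sqrt hv.le]
    rw [integral_div, hfun_sq K hK k q hq, div_self hv.ne']

lemma phi_norm (K : ℕ) (k : Fin K) (q : ℕ → ℝ) (s : ℝ) : ‖phi q K k s‖ ≤ 1 := by
  have : IsProbabilityMeasure
      ((gaussianReal 0 1).map (fun x => hfun q K k x / √(((K:ℝ)-1)/K^2))) :=
    Measure.isProbabilityMeasure_map ((hfun_meas q K k).div_const _).aemeasurable
  exact norm_charFun_le_one s

lemma W_char {n : ℕ} (K : ℕ) (hK : 2 ≤ K) (k : Fin K) (q : ℕ → ℝ) (w : Fin n → ℝ) :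
    ∫ z, Complex.exp (((∑ i, w i * hfun q K k (z i) : ℝ) : ℂ) * Complex.I) ∂(stdG n) =
      ∏ i, phi q K k (w i * √(((K:ℝ)-1)/K^2)) := by
  have hv := vpos K hK
  have hs : √(((K:ℝ)-1)/K^2) ≠ 0 := (Real.sqrt_pos.2 hv).ne'
  have e : ∀ z : Fin n → ℝ, Complex.exp (((∑ i, w i * hfun q K k (z i) : ℝ) : ℂ) * Complex.I) =
      ∏ i, Complex.exp (((w i * hfun q K k (z i) : ℝ) : ℂ) * Complex.I) := by
    intro z
    rw [← Complex.exp_sum]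
    push_cast
    rw [Finset.sum_mul]
  simp_rw [e]
  rw [integral_fintype_prod_eq_prod
    (f := fun i (x : ℝ) => Complex.exp (((w i * hfun q K k x : ℝ) : ℂ) * Complex.I))]
  refine Finset.prod_congr rfl fun i _ => ?_
  unfold phi
  rw [charFun_apply_real, integral_map ((hfun_meas q K k).div_const _).aemeasurable
    (by fun_prop)]
  refine integral_congr_ae (ae_of_all _ fun x => ?_)
  simp only
  congr 2
  rw [← Complex.ofReal_mul]
  congr 1
  field_simp


lemma fclose (K : ℕ) (hK : 2 ≤ K) (k : Fin K) (q : ℕ → ℝ)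
    (hq : ∀ m : ℕ, 0 < m → m < K → stdGaussianCDF (q m) = (m : ℝ) / K)
    (C : ∀ n : ℕ, Matrix (Fin n) (Fin n) ℝ) (hs : ∀ n, (C n)ᵀ = C n)
    (hd : ∀ n i, C n i i ≤ 1) (hop : Tendsto (fun n => opNorm (C n - 1)) atTop (𝓝 0)) :
    Tendsto (fun n => opNorm ((Matrix.of fun i j => fkfun q K k (C n i j))
      - (((K:ℝ)-1)/K^2) • 1)) atTop (𝓝 0) := by
  obtain ⟨c, C0, hC0, hT⟩ := fk_taylor K hK k q hq
  rw [Metric.tendsto_nhds]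
  intro ε hε
  obtain ⟨δ, hδ, h⟩ := entrywise_close _ _ c C0 hC0 (fk_tendsto K hK k q hq) hT
    (η := ε / 2) (by positivity)
  filter_upwards [hop.eventually_le_const hδ] with n hn
  rw [Real.dist_eq, sub_zero, abs_of_nonneg (opNorm_nonneg' _)]
  have := h n (C n) (hs n) (hd n) hn
  linarith

lemma psd_symm {m : ℕ} {S : Matrix (Fin m) (Fin m) ℝ} (h : S.PosSemidef) : Sᵀ = S := by
  have := h.isHermitian.eq
  rwa [conjTranspose_eq_transpose_of_trivial] at this

lemma scaled_sq (K : ℕ) (hK : 2 ≤ K) {m : ℕ} (Q F : Matrix (Fin m) (Fin m) ℝ) (hF : Q * Q = F) :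
    ((((K:ℝ) / √((K:ℝ) - 1)) • Q) * (((K:ℝ) / √((K:ℝ) - 1)) • Q) - 1) =
      ((K:ℝ)^2 / ((K:ℝ) - 1)) • (F - (((K:ℝ)-1)/K^2) • 1) := by
  have h2 : (2:ℝ) ≤ K := by exact_mod_cast hK
  have h1 : 0 < (K:ℝ) - 1 := by linarith
  have hc : (K:ℝ) / √((K:ℝ) - 1) * ((K:ℝ) / √((K:ℝ) - 1)) = (K:ℝ)^2 / ((K:ℝ) - 1) := by
    rw [div_mul_div_comm, Real.mul_self_sqrt h1.le, sq]
  rw [smul_mul_assoc, mul_smul_comm, smul_smul, hc, hF, smul_sub, smul_smul]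
  have : (K:ℝ)^2 / ((K:ℝ) - 1) * (((K:ℝ)-1)/K^2) = 1 := by
    have : (K:ℝ) ≠ 0 := by linarith
    field_simp
  rw [this, one_smul]

lemma quad_sq {m : ℕ} (P : Matrix (Fin m) (Fin m) ℝ) (hP : Pᵀ = P) (x : Fin m → ℝ) :
    |∑ i, (P *ᵥ x) i ^ 2 - ∑ i, x i ^ 2| ≤ opNorm (P * P - 1) * ∑ i, x i ^ 2 := by
  have e : ∑ i, (P *ᵥ x) i ^ 2 - ∑ i, x i ^ 2 = x ⬝ᵥ ((P * P - 1) *ᵥ x) := by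
    rw [sub_mulVec, one_mulVec, dotProduct_sub, ← mulVec_mulVec, dotProduct_mulVec x P,
      ← mulVec_transpose, hP]
    simp [dotProduct, sq]
  rw [e]
  exact quad_le _ _

lemma transfer (K : ℕ) (hK : 2 ≤ K) (k : Fin K) (q : ℕ → ℝ)
    (hq : ∀ m : ℕ, 0 < m → m < K → stdGaussianCDF (q m) = (m : ℝ) / K)
    (S : ∀ nn : ℕ, Matrix (Fin nn) (Fin nn) ℝ)
    (hSpsd : ∀ nn, (S nn).PosSemidef) (hSdiag : ∀ nn (i : Fin nn), S nn i i = 1)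
    (hSop : Tendsto (fun nn => opNorm (S nn - 1)) atTop (𝓝 0))
    (Y : ∀ nn : ℕ, Fin nn → ℝ)
    (Q : ∀ nn : ℕ, Matrix (Fin nn) (Fin nn) ℝ)
    (hQpsd : ∀ nn, (Q nn).PosSemidef)
    (hQsq : ∀ nn, Q nn * Q nn = Matrix.of fun i j => fkfun q K k (S nn i j))
    (Ytil : ∀ nn : ℕ, Fin nn → ℝ)
    (hYtil : ∀ nn, Ytil nn = ((K : ℝ) / Real.sqrt ((K : ℝ) - 1)) • (Q nn *ᵥ Y nn))
    (σ2 : ℝ)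
    (h1 : ∀ ε > (0 : ℝ), ∀ᶠ nn in atTop, ∀ i : Fin nn, Ytil nn i ^ 2 / nn < ε)
    (h2 : Tendsto (fun nn => ((K : ℝ) - 1) / nn * ∑ i, Ytil nn i ^ 2) atTop (𝓝 σ2))
    (M : ℝ) (hM : 0 < M) (h3 : ∀ nn, ∑ i, Y nn i ^ 2 ≤ nn * M) :
    (∀ ε > (0 : ℝ), ∀ᶠ nn in atTop, ∀ i : Fin nn, Y nn i ^ 2 / nn < ε) ∧
    Tendsto (fun nn => ((K : ℝ) - 1) / nn * ∑ i, Y nn i ^ 2) atTop (𝓝 σ2) := by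
  have hK2 : (2:ℝ) ≤ K := by exact_mod_cast hK
  have hK1 : 0 < (K:ℝ) - 1 := by linarith
  set c := (K : ℝ) / Real.sqrt ((K : ℝ) - 1) with hc
  have hc0 : 0 ≤ c := by positivity
  have hF := fclose K hK k q hq S (fun n => psd_symm (hSpsd n)) (fun n i => (hSdiag n i).le) hSop
  set e : ℕ → ℝ := fun n => opNorm ((c • Q n) * (c • Q n) - 1) with he
  have he0 : ∀ n, 0 ≤ e n := fun n => opNorm_nonneg' _
  have het : Tendsto e atTop (𝓝 0) := by
    have : ∀ n, e n = |(K:ℝ)^2 / ((K:ℝ) - 1)| * opNorm ((Matrix.of fun i j =>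
        fkfun q K k (S n i j)) - (((K:ℝ)-1)/K^2) • 1) := by
      intro n
      rw [← opNorm_smul', ← scaled_sq K hK (Q n) _ (hQsq n)]
    simp_rw [funext this]
    simpa using hF.const_mul |(K:ℝ)^2 / ((K:ℝ) - 1)|
  have hPpsd : ∀ n, (c • Q n).PosSemidef := fun n => (hQpsd n).smul hc0
  have hYP : ∀ n, Ytil n = (c • Q n) *ᵥ Y n := fun n => by rw [hYtil n, smul_mulVec]
  have hdiff : ∀ n, ∑ i, (Ytil n i - Y n i) ^ 2 ≤ e n ^ 2 * (n * M) := by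
    intro n
    have a := sum_sq_mulVec_le (c • Q n - 1) (Y n)
    rw [sub_mulVec, one_mulVec, ← hYP] at a
    have b := sqrt_close _ (hPpsd n)
    calc _ ≤ _ := a
      _ ≤ e n ^ 2 * (n * M) := by
        refine mul_le_mul (pow_le_pow_left₀ (opNorm_nonneg' _) b 2) (h3 n)
          (Finset.sum_nonneg fun i _ => sq_nonneg _) (by positivity)
  constructor
  · intro ε hε
    have he2 : Tendsto (fun n => e n ^ 2 * M) atTop (𝓝 0) := by
      simpa using (het.pow 2).mul_const M
    filter_upwards [h1 (ε / 4) (by positivity),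
      he2.eventually_lt_const (show (0:ℝ) < ε / 4 by positivity), eventually_gt_atTop 0]
      with n hn1 hn2 hn3 i
    have hn : (0:ℝ) < n := by exact_mod_cast hn3
    have a1 := hn1 i
    rw [div_lt_iff₀ hn] at a1 ⊢
    have a2 : (Ytil n i - Y n i) ^ 2 ≤ e n ^ 2 * (n * M) :=
      (Finset.single_le_sum (f := fun i => (Ytil n i - Y n i) ^ 2) (fun i _ => sq_nonneg _)
        (Finset.mem_univ i)).trans (hdiff n)
    have a3 : e n ^ 2 * (n * M) < ε / 4 * n := by
      have := mul_lt_mul_of_pos_right hn2 hn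
      linarith
    nlinarith [sq_nonneg (2 * Ytil n i - Y n i)]
  · have hz : Tendsto (fun n => (((K : ℝ) - 1) / n * ∑ i, Ytil n i ^ 2) -
        (((K : ℝ) - 1) / n * ∑ i, Y n i ^ 2)) atTop (𝓝 0) := by
      refine squeeze_zero_norm' (a := fun n => ((K:ℝ) - 1) * (e n * M)) ?_
        (by simpa using (het.mul_const M).const_mul ((K:ℝ) - 1))
      filter_upwards [eventually_gt_atTop 0] with n hn3
      have hn : (0:ℝ) < n := by exact_mod_cast hn3
      have a := quad_sq _ (psd_symm (hPpsd n)) (Y n)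
      rw [← hYP] at a
      rw [← mul_sub, Real.norm_eq_abs, abs_mul, abs_of_pos (by positivity)]
      calc ((K:ℝ) - 1) / n * |∑ i, Ytil n i ^ 2 - ∑ i, Y n i ^ 2|
          ≤ ((K:ℝ) - 1) / n * (e n * (n * M)) := by
            refine mul_le_mul_of_nonneg_left (a.trans ?_) (by positivity)
            exact mul_le_mul_of_nonneg_left (h3 n) (he0 n)
        _ = _ := by field_simp
    have := h2.sub hz
    simpa using this


lemma exp_diff (a b : ℝ) :
    ‖Complex.exp ((a:ℂ) * Complex.I) - Complex.exp ((b:ℂ) * Complex.I)‖ ≤ |a - b| := by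
  have e : Complex.exp ((a:ℂ) * Complex.I) - Complex.exp ((b:ℂ) * Complex.I) =
      Complex.exp ((b:ℂ) * Complex.I) * (Complex.exp (Complex.I * ((a - b : ℝ) : ℂ)) - 1) := by
    rw [mul_sub, ← Complex.exp_add, mul_one]
    congr 2
    push_cast
    ring
  rw [e, norm_mul, Complex.norm_exp_ofReal_mul_I, one_mul]
  exact Real.norm_exp_I_mul_ofReal_sub_one_le

lemma char_diff {α : Type*} [MeasurableSpace α] (μ : Measure α) [IsProbabilityMeasure μ]
    (U V : α → ℝ) (hU : Measurable U) (hV : Measurable V) (C : ℝ) (hC : ∀ z, |U z - V z| ≤ C)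
    (ε : ℝ) (hε : 0 < ε) (h : ∫ z, (U z - V z) ^ 2 ∂μ ≤ ε ^ 2) :
    ‖∫ z, Complex.exp ((U z : ℂ) * Complex.I) ∂μ - ∫ z, Complex.exp ((V z : ℂ) * Complex.I) ∂μ‖
      ≤ 2 * ε := by
  have hi : ∀ W : α → ℝ, Measurable W →
      Integrable (fun z => Complex.exp ((W z : ℂ) * Complex.I)) μ := by
    intro W hW
    refine Integrable.of_bound (C := 1) ?_ (ae_of_all _ fun z => ?_)
    · exact (by fun_prop : Measurable fun z => Complex.exp ((W z : ℂ) * Complex.I)).aestronglyMeasurable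
    · rw [Complex.norm_exp_ofReal_mul_I]
  rw [← integral_sub (hi U hU) (hi V hV)]
  have hsq : Integrable (fun z => (U z - V z) ^ 2) μ := by
    refine Integrable.of_bound (C := C ^ 2) ?_ (ae_of_all _ fun z => ?_)
    · exact ((hU.sub hV).pow_const 2).aestronglyMeasurable
    · rw [Real.norm_eq_abs, abs_pow]
      exact pow_le_pow_left₀ (abs_nonneg _) (hC z) 2
  have hb : ∀ z, ‖Complex.exp ((U z : ℂ) * Complex.I) - Complex.exp ((V z : ℂ) * Complex.I)‖
      ≤ ε + (U z - V z) ^ 2 / ε := by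
    intro z
    refine (exp_diff _ _).trans ?_
    rw [← sub_nonneg]
    have : ε + (U z - V z) ^ 2 / ε - |U z - V z| =
        (ε ^ 2 + |U z - V z| ^ 2 - ε * |U z - V z|) / ε := by
      rw [sq_abs]; field_simp
    rw [this]
    refine div_nonneg ?_ hε.le
    nlinarith [sq_nonneg (ε - |U z - V z|), sq_nonneg (ε + |U z - V z|)]
  calc _ ≤ ∫ z, (ε + (U z - V z) ^ 2 / ε) ∂μ :=
        norm_integral_le_of_norm_le ((integrable_const _).add (hsq.div_const _)) (ae_of_all _ hb)
    _ = ε + (∫ z, (U z - V z) ^ 2 ∂μ) / ε := by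
        rw [integral_add (integrable_const _) (hsq.div_const _), integral_div]; simp
    _ ≤ ε + ε ^ 2 / ε := by gcongr
    _ = 2 * ε := by field_simp; ring

lemma core_clt (K : ℕ) (hK : 2 ≤ K) (k : Fin K) (q : ℕ → ℝ)
    (hq : ∀ m : ℕ, 0 < m → m < K → stdGaussianCDF (q m) = (m : ℝ) / K)
    (B : ∀ n : ℕ, Matrix (Fin n) (Fin n) ℝ) (hB : ∀ n, (B n).PosSemidef)
    (hd : ∀ n i, (B n * B n) i i = 1)
    (hop : Tendsto (fun n => opNorm (B n * B n - 1)) atTop (𝓝 0))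
    (w : ∀ n : ℕ, Fin n → ℝ) (M : ℝ) (hM : ∀ n, ∑ i, w n i ^ 2 ≤ M)
    (hmax : ∀ ε > (0:ℝ), ∀ᶠ n in atTop, ∀ i, w n i ^ 2 < ε) (σ : ℝ)
    (hsum : Tendsto (fun n => (((K:ℝ)-1)/K^2) * ∑ i, w n i ^ 2) atTop (𝓝 σ)) (t : ℝ) :
    Tendsto (fun n => ∫ z, Complex.exp (((t * ∑ i, w n i * hfun q K k ((B n *ᵥ z) i) : ℝ) : ℂ)
      * Complex.I) ∂(stdG n)) atTop (𝓝 (Complex.exp (-((t ^ 2 * σ : ℝ) : ℂ) / 2))) := by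
  have hv := vpos K hK
  have hBs : ∀ n, (B n)ᵀ = B n := fun n => psd_symm (hB n)
  have hBs' : ∀ n i j, B n i j = B n j i := fun n i j => by
    conv_lhs => rw [← hBs n]
    rfl
  have hBop : Tendsto (fun n => opNorm (B n - 1)) atTop (𝓝 0) :=
    squeeze_zero (fun n => opNorm_nonneg' _) (fun n => sqrt_close _ (hB n)) hop
  have hBd : ∀ n i, B n i i ≤ 1 := by
    intro n i
    have h := hd n i
    rw [Matrix.mul_apply] at h
    have h2 : B n i i * B n i i ≤ 1 := by
      rw [← h]
      refine Finset.single_le_sum (f := fun j => B n i j * B n j i) (fun j _ => ?_)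
        (Finset.mem_univ i)
      rw [hBs' n j i]
      exact mul_self_nonneg _
    nlinarith
  have hSs : ∀ n, (B n * B n)ᵀ = B n * B n := fun n => by rw [transpose_mul, hBs]
  have f1 := fclose K hK k q hq (fun n => B n * B n) hSs (fun n i => (hd n i).le) hop
  have f2 := fclose K hK k q hq B hBs hBd hBop
  have hgt : ∀ {n : ℕ} (C : Matrix (Fin n) (Fin n) ℝ), opNorm (C - 1) < 1 →
      ∀ i j, -1 < C i j := by
    intro n C hC i j
    have h := abs_lt.1 ((entry_le (C - 1) i j).trans_lt hC)
    rw [Matrix.sub_apply, Matrix.one_apply] at h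
    split_ifs at h <;> linarith [h.1]
  -- CLT for the independent version
  have hW : Tendsto (fun n => ∫ z : Fin n → ℝ, Complex.exp (((t * ∑ i, w n i * hfun q K k (z i) : ℝ) : ℂ)
      * Complex.I) ∂(stdG n)) atTop (𝓝 (Complex.exp (-((t ^ 2 * σ : ℝ) : ℂ) / 2))) := by
    have e : ∀ n, ∫ z : Fin n → ℝ, Complex.exp (((t * ∑ i, w n i * hfun q K k (z i) : ℝ) : ℂ)
      * Complex.I) ∂(stdG n) = ∏ i, phi q K k ((t * w n i) * √(((K:ℝ)-1)/K^2)) := by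
      intro n
      rw [← W_char K hK k q (fun i => t * w n i)]
      simp only [Finset.mul_sum, mul_assoc]
    simp_rw [e]
    have hsq : ∀ n i, (t * w n i * √(((K:ℝ)-1)/K^2)) ^ 2 =
        t ^ 2 * ((((K:ℝ)-1)/K^2) * w n i ^ 2) := by
      intro n i
      rw [mul_pow, mul_pow, Real.sq_sqrt hv.le]
      ring
    refine lindeberg (phi q K k) (phi_norm K k q) (phi_taylor K hK k q hq)
      (fun n i => (t * w n i) * √(((K:ℝ)-1)/K^2)) ?_ _ ?_
    · intro ε hε
      have hpos : 0 < t ^ 2 * (((K:ℝ)-1)/K^2) + 1 := by positivity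
      filter_upwards [hmax (ε ^ 2 / (t ^ 2 * (((K:ℝ)-1)/K^2) + 1)) (by positivity)] with n hn i
      refine abs_lt_of_sq_lt_sq ?_ hε.le
      rw [hsq]
      have a := hn i
      rw [lt_div_iff₀ hpos] at a
      nlinarith [sq_nonneg (w n i)]
    · simp_rw [hsq, ← Finset.mul_sum]
      exact hsum.const_mul _
  have hdiff : Tendsto (fun n => ‖∫ z, Complex.exp (((t * ∑ i, w n i * hfun q K k ((B n *ᵥ z) i) : ℝ) : ℂ)
      * Complex.I) ∂(stdG n) - ∫ z : Fin n → ℝ, Complex.exp (((t * ∑ i, w n i * hfun q K k (z i) : ℝ) : ℂ)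
      * Complex.I) ∂(stdG n)‖) atTop (𝓝 0) := by
    rw [Metric.tendsto_nhds]
    intro ε hε
    have hM0 : 0 ≤ M := (Finset.sum_nonneg fun i _ => sq_nonneg _).trans (hM 0)
    have hpos : 0 < t ^ 2 * (3 * M) + 1 := by positivity
    set η := (ε / 3) ^ 2 / (t ^ 2 * (3 * M) + 1) with hη
    have hη0 : 0 < η := by positivity
    filter_upwards [f1.eventually_le_const hη0, f2.eventually_le_const hη0,
      hop.eventually_lt_const one_pos, hBop.eventually_lt_const one_pos] with n hn1 hn2 hn3 hn4
    rw [Real.dist_eq, sub_zero, abs_norm]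
    have hmB : Measurable (fun z : Fin n → ℝ => B n *ᵥ z) :=
      (Continuous.matrix_mulVec continuous_const continuous_id).measurable
    have hmG : Measurable (fun z : Fin n → ℝ => t * ∑ i, w n i * hfun q K k (z i)) := by
      refine Measurable.const_mul (Finset.measurable_fun_sum _ fun i _ => ?_) _
      exact ((hfun_meas q K k).comp (measurable_pi_apply i)).const_mul _
    have hc := coupling_le (B n) (hBs n) (hd n) (hgt _ hn3) (hgt _ hn4) K hK k q hq (w n) η hn1 hn2
    have heq : ∀ z : Fin n → ℝ, (t * ∑ i, w n i * hfun q K k ((B n *ᵥ z) i))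
        - (t * ∑ i, w n i * hfun q K k (z i)) =
        t * (∑ i, w n i * (hfun q K k ((B n *ᵥ z) i) - hfun q K k (z i))) := by
      intro z
      rw [← mul_sub, ← Finset.sum_sub_distrib]
      simp_rw [mul_sub]
    have := char_diff (stdG n) (fun z => t * ∑ i, w n i * hfun q K k ((B n *ᵥ z) i))
      (fun z => t * ∑ i, w n i * hfun q K k (z i)) (hmG.comp hmB) hmG
      (|t| * ∑ i, |w n i| * 2) ?_ (ε / 3) (by positivity) ?_
    · linarith
    · intro z
      rw [heq, abs_mul]
      refine mul_le_mul_of_nonneg_left ?_ (abs_nonneg _)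
      refine (Finset.abs_sum_le_sum_abs _ _).trans (Finset.sum_le_sum fun i _ => ?_)
      rw [abs_mul]
      refine mul_le_mul_of_nonneg_left ?_ (abs_nonneg _)
      have a1 := hfun_bound q K hK k ((B n *ᵥ z) i)
      have a2 := hfun_bound q K hK k (z i)
      have a3 := abs_sub (hfun q K k ((B n *ᵥ z) i)) (hfun q K k (z i))
      linarith
    · simp only [heq, mul_pow]
      rw [integral_const_mul]
      calc _ ≤ t ^ 2 * (3 * η * ∑ i, w n i ^ 2) := mul_le_mul_of_nonneg_left hc (sq_nonneg _)
        _ ≤ t ^ 2 * (3 * η * M) := by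
            have := hM n
            gcongr
        _ = (t ^ 2 * (3 * M)) * η := by ring
        _ ≤ (t ^ 2 * (3 * M) + 1) * η := by gcongr; linarith
        _ = (ε / 3) ^ 2 := by rw [hη]; field_simp
  rw [tendsto_iff_norm_sub_tendsto_zero] at hW ⊢
  have hfin := hdiff.add hW
  rw [add_zero] at hfin
  refine squeeze_zero (fun n => norm_nonneg _) (fun n => ?_) hfin
  exact norm_sub_le_norm_sub_add_norm_sub _ _ _


/-- **Asymptotic normality under a vanishing perturbation of the identity.**
For matrices `Σ⁽ⁿ⁾` in the correlation elliptope with `‖Σ⁽ⁿ⁾ − I‖_op → 0`, Gaussianization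
`T⁽ⁿ⁾ ~ N(0, Σ⁽ⁿ⁾)`, `D_i = g(T_i)`, and `Ỹ(k) = f_k(I)^{−1/2} f_k(Σ⁽ⁿ⁾)^{1/2} Y(k)` (with
`Q_n = f_k(Σ⁽ⁿ⁾)^{1/2}` the unique positive semidefinite square root and
`f_k(I)^{−1/2} = (K/√(K−1)) I`), if (1) `max_i Ỹ_i(k)²/n → 0`, (2)
`((K−1)/n)‖Ỹ(k)‖² → σ² > 0`, and (3) `‖Y⁽ⁿ⁾(k)‖² ≤ nM`, then `√n (τ̂_k − τ_k)` converges
in distribution to `N(0, σ²)`. -/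
theorem asymptotic_normality_vanishing_perturbation
    (K : ℕ) (hK : 2 ≤ K) (k : Fin K)
    (q : ℕ → ℝ) (hq : ∀ m : ℕ, 0 < m → m < K → stdGaussianCDF (q m) = (m : ℝ) / K)
    (Ω : ℕ → Type) [∀ nn, MeasureSpace (Ω nn)]
    [∀ nn, IsProbabilityMeasure (volume : Measure (Ω nn))]
    (S : ∀ nn : ℕ, Matrix (Fin nn) (Fin nn) ℝ)
    (hSpsd : ∀ nn, (S nn).PosSemidef) (hSdiag : ∀ nn (i : Fin nn), S nn i i = 1)
    (hSop : Tendsto (fun nn => opNorm (S nn - 1)) atTop (𝓝 0))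
    (Y : ∀ nn : ℕ, Fin nn → ℝ)
    (A : ∀ nn : ℕ, Matrix (Fin nn) (Fin nn) ℝ) (hA : ∀ nn, A nn * (A nn)ᵀ = S nn)
    (T : ∀ nn : ℕ, Ω nn → Fin nn → ℝ) (hTmeas : ∀ nn, Measurable (T nn))
    (hTlaw : ∀ nn, Measure.map (T nn) volume =
      Measure.map (fun z => A nn *ᵥ z) (Measure.pi fun _ : Fin nn => gaussianReal 0 1))
    (D : ∀ nn : ℕ, Ω nn → Fin nn → Fin K)
    (hD : ∀ nn ω i (kk : Fin K), D nn ω i = kk ↔ T nn ω i ∈ armSet q K kk)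
    (Q : ∀ nn : ℕ, Matrix (Fin nn) (Fin nn) ℝ)
    (hQpsd : ∀ nn, (Q nn).PosSemidef)
    (hQsq : ∀ nn, Q nn * Q nn = Matrix.of fun i j => fkfun q K k (S nn i j))
    (Ytil : ∀ nn : ℕ, Fin nn → ℝ)
    (hYtil : ∀ nn, Ytil nn = ((K : ℝ) / Real.sqrt ((K : ℝ) - 1)) • (Q nn *ᵥ Y nn))
    (σ2 : ℝ≥0) (hσ2 : 0 < σ2)
    (h1 : ∀ ε > (0 : ℝ), ∀ᶠ nn in atTop, ∀ i : Fin nn, Ytil nn i ^ 2 / nn < ε)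
    (h2 : Tendsto (fun nn => ((K : ℝ) - 1) / nn * ∑ i, Ytil nn i ^ 2) atTop (𝓝 (σ2 : ℝ)))
    (M : ℝ) (hM : 0 < M) (h3 : ∀ nn, ∑ i, Y nn i ^ 2 ≤ nn * M) :
    ∀ f : BoundedContinuousFunction ℝ ℝ,
      Tendsto
        (fun nn : ℕ => ∫ ω, f (Real.sqrt (nn : ℝ) *
          ((K : ℝ) / (nn : ℝ) * ∑ i, (if D nn ω i = k then Y nn i else 0) -
            (1 : ℝ) / (nn : ℝ) * ∑ i, Y nn i)))
        atTop (𝓝 (∫ x, f x ∂(gaussianReal 0 σ2))) := by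
  intro f
  have hK2 : (2:ℝ) ≤ K := by exact_mod_cast hK
  have hK0 : (K:ℝ) ≠ 0 := by linarith
  obtain ⟨g1, g2⟩ := transfer K hK k q hq S hSpsd hSdiag hSop Y Q hQpsd hQsq Ytil hYtil σ2 h1 h2
    M hM h3
  choose B hBpsd hBB using fun n => exists_sqrt (S n) (hSpsd n)
  set w : ∀ n : ℕ, Fin n → ℝ := fun n i => (K:ℝ) * Y n i / √(n:ℝ) with hw
  have hw2 : ∀ n i, w n i ^ 2 = (K:ℝ) ^ 2 * (Y n i ^ 2 / n) := by
    intro n i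
    simp only [hw]
    rw [div_pow, mul_pow, Real.sq_sqrt (Nat.cast_nonneg n), mul_div_assoc]
  have hwsum : ∀ n, ∑ i, w n i ^ 2 = (K:ℝ) ^ 2 * ((∑ i, Y n i ^ 2) / n) := by
    intro n
    simp_rw [hw2]
    rw [← Finset.mul_sum, Finset.sum_div]
  have hcore := core_clt K hK k q hq B hBpsd (fun n i => by rw [hBB]; exact hSdiag n i)
    (by simp_rw [hBB]; exact hSop) w ((K:ℝ) ^ 2 * M) (by
      intro n
      rw [hwsum]
      refine mul_le_mul_of_nonneg_left ?_ (sq_nonneg _)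
      rcases Nat.eq_zero_or_pos n with h0 | h0
      · subst h0
        simpa using hM.le
      · have : (0:ℝ) < n := by exact_mod_cast h0
        rw [div_le_iff₀ this, mul_comm]
        exact h3 n) (by
      intro ε hε
      filter_upwards [g1 (ε / (K:ℝ) ^ 2) (by positivity)] with n hn i
      rw [hw2]
      have := hn i
      rw [lt_div_iff₀ (by positivity)] at this
      linarith) σ2 (by
      refine g2.congr fun n => ?_
      rw [hwsum]
      field_simp)
  have hmB : ∀ n, Measurable (fun z : Fin n → ℝ => B n *ᵥ z) := fun n =>
    (Continuous.matrix_mulVec continuous_const continuous_id).measurable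
  have hmG : ∀ n, Measurable (fun z : Fin n → ℝ => ∑ i, w n i * hfun q K k (z i)) := fun n =>
    Finset.measurable_fun_sum _ fun i _ =>
      ((hfun_meas q K k).comp (measurable_pi_apply i)).const_mul _
  have hmGB : ∀ n, Measurable (fun z : Fin n → ℝ => ∑ i, w n i * hfun q K k ((B n *ᵥ z) i)) :=
    fun n => (hmG n).comp (hmB n)
  let μ : ℕ → ProbabilityMeasure ℝ := fun n =>
    ⟨(stdG n).map (fun z : Fin n → ℝ => ∑ i, w n i * hfun q K k ((B n *ᵥ z) i)),
      Measure.isProbabilityMeasure_map (hmGB n).aemeasurable⟩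
  let μ₀ : ProbabilityMeasure ℝ := ⟨gaussianReal 0 σ2, inferInstance⟩
  have hμ : Tendsto μ atTop (𝓝 μ₀) := by
    refine ProbabilityMeasure.tendsto_of_tendsto_charFun fun t => ?_
    have e0 : charFun (μ₀ : Measure ℝ) t = Complex.exp (-((t ^ 2 * (σ2:ℝ) : ℝ) : ℂ) / 2) := by
      change charFun (gaussianReal 0 σ2) t = _
      rw [charFun_gaussianReal]
      congr 1
      push_cast
      ring
    rw [e0]
    refine (hcore t).congr fun n => ?_
    change _ = charFun ((stdG n).map
      (fun z : Fin n → ℝ => ∑ i, w n i * hfun q K k ((B n *ᵥ z) i))) t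
    rw [charFun_apply_real, integral_map (hmGB n).aemeasurable (by fun_prop)]
    simp only [Complex.ofReal_mul]
  have hlim := ProbabilityMeasure.tendsto_iff_forall_integral_tendsto.1 hμ f
  refine hlim.congr fun n => ?_
  change ∫ x, f x ∂((stdG n).map
      (fun z : Fin n → ℝ => ∑ i, w n i * hfun q K k ((B n *ᵥ z) i))) = _
  have hX : ∀ ω, Real.sqrt (n : ℝ) *
          ((K : ℝ) / (n : ℝ) * ∑ i, (if D n ω i = k then Y n i else 0) -
            (1 : ℝ) / (n : ℝ) * ∑ i, Y n i) = ∑ i, w n i * hfun q K k (T n ω i) := by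
    intro ω
    have hs : √(n:ℝ) / n = 1 / √(n:ℝ) := Real.sqrt_div_self'
    have e1 : Real.sqrt (n : ℝ) *
          ((K : ℝ) / (n : ℝ) * ∑ i, (if D n ω i = k then Y n i else 0) -
            (1 : ℝ) / (n : ℝ) * ∑ i, Y n i) =
        (√(n:ℝ) / n) * ((K:ℝ) * ∑ i, (if D n ω i = k then Y n i else 0) - ∑ i, Y n i) := by ring
    rw [e1, hs, Finset.mul_sum, ← Finset.sum_sub_distrib, Finset.mul_sum]
    refine Finset.sum_congr rfl fun i _ => ?_
    simp only [hw, hfun]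
    by_cases hk : D n ω i = k
    · have hk' := (hD n ω i k).1 hk
      rw [if_pos hk, Set.indicator_of_mem hk']
      simp only [Pi.one_apply]
      field_simp
    · have hk' : T n ω i ∉ armSet q K k := fun h => hk ((hD n ω i k).2 h)
      rw [if_neg hk, Set.indicator_of_notMem hk']
      field_simp
      ring
  simp_rw [hX]
  have hlaw : (volume : Measure (Ω n)).map (T n) = (stdG n).map (fun z => B n *ᵥ z) := by
    rw [hTlaw n]
    refine aux_law_eq _ _ ?_
    rw [hA, psd_symm (hBpsd n), hBB]
  have r := integral_map (μ := (volume : Measure (Ω n))) (hTmeas n).aemeasurable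
    (f := fun t : Fin n → ℝ => f (∑ i, w n i * hfun q K k (t i)))
    (f.continuous.measurable.comp (hmG n)).aestronglyMeasurable
  have r2 := integral_map (μ := stdG n) (hmB n).aemeasurable
    (f := fun t : Fin n → ℝ => f (∑ i, w n i * hfun q K k (t i)))
    (f.continuous.measurable.comp (hmG n)).aestronglyMeasurable
  rw [← r, hlaw, r2, integral_map (hmGB n).aemeasurable f.continuous.aestronglyMeasurable]

end
end

section
/- (Hájek's lemma.) Let (T_n) and (S_n) be sequences of square-integrable real random variables, each pair (T_n, S_n) defined on a common probability space, with Var(T_n) > 0 for all n. If (T_n − E T_n)/√Var(T_n) converges in distribution to a probability law L and E[(T_n − S_n)²]/Var(T_n) → 0, then Var(T_n)/Var(S_n) → 1 (in particular Var(S_n) > 0 for all sufficiently large n) and (S_n − E S_n)/√Var(S_n) also converges in distribution to L. -/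
open MeasureTheory ProbabilityTheory Filter
open scoped BigOperators ENNReal NNReal Topology

noncomputable section

/-- Variance of a real random variable on a measure space. -/
def var {Ω : Type*} [MeasureSpace Ω] (U : Ω → ℝ) : ℝ :=
  ∫ ω, (U ω - ∫ ω', U ω') ^ 2

lemma hj_abs_le {Ω : Type} [MeasureSpace Ω] [IsProbabilityMeasure (volume : Measure Ω)]
    (Z : Ω → ℝ) (hZ : MemLp Z 2 (volume : Measure Ω)) :
    ∫ ω, |Z ω| ≤ Real.sqrt (∫ ω, (Z ω) ^ 2) := by
  apply Real.le_sqrt_of_sq_le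
  have h1 : MemLp (fun ω => |Z ω|) 2 (volume : Measure Ω) := hZ.abs
  have h2 := variance_nonneg (fun ω => |Z ω|) (volume : Measure Ω)
  rw [variance_eq_sub h1] at h2
  simp only [Pi.pow_apply, sq_abs] at h2
  linarith

lemma hj_conv (Ω : ℕ → Type) [∀ n, MeasureSpace (Ω n)]
    [∀ n, IsProbabilityMeasure (volume : Measure (Ω n))]
    (X Y : ∀ n, Ω n → ℝ)
    (hX : ∀ n, Measurable (X n)) (hY : ∀ n, Measurable (Y n))
    (hX2 : ∀ n, MemLp (X n) 2 (volume : Measure (Ω n)))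
    (hY2 : ∀ n, MemLp (Y n) 2 (volume : Measure (Ω n)))
    (L : Measure ℝ) [IsProbabilityMeasure L]
    (hconv : ∀ f : BoundedContinuousFunction ℝ ℝ,
      Tendsto (fun n => ∫ ω, f (X n ω)) atTop (𝓝 (∫ x, f x ∂L)))
    (hdiff : Tendsto (fun n => ∫ ω, (Y n ω - X n ω) ^ 2) atTop (𝓝 0)) :
    ∀ f : BoundedContinuousFunction ℝ ℝ,
      Tendsto (fun n => ∫ ω, f (Y n ω)) atTop (𝓝 (∫ x, f x ∂L)) := by
  let P : ℕ → ProbabilityMeasure ℝ := fun n =>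
    ⟨(volume : Measure (Ω n)).map (Y n), Measure.isProbabilityMeasure_map (hY n).aemeasurable⟩
  let P0 : ProbabilityMeasure ℝ := ⟨L, inferInstance⟩
  have key : Tendsto P atTop (𝓝 P0) := by
    rw [tendsto_iff_forall_lipschitz_integral_tendsto]
    rintro F ⟨C, hC⟩ ⟨K, hK⟩
    let f : BoundedContinuousFunction ℝ ℝ := ⟨⟨F, hK.continuous⟩, C, hC⟩
    have hf := hconv f
    have hs : Tendsto (fun n => (K : ℝ) * Real.sqrt (∫ ω, (Y n ω - X n ω) ^ 2)) atTop (𝓝 0) := by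
      have := (hdiff.sqrt).const_mul (K : ℝ)
      simpa using this
    have hd : Tendsto (fun n => (∫ ω, F (Y n ω)) - ∫ ω, F (X n ω)) atTop (𝓝 0) := by
      refine squeeze_zero_norm (fun n => ?_) hs
      have iY : Integrable (fun ω => F (Y n ω)) (volume : Measure (Ω n)) := by
        have := f.integrable ((volume : Measure (Ω n)).map (Y n))
        exact this.comp_measurable (hY n)
      have iX : Integrable (fun ω => F (X n ω)) (volume : Measure (Ω n)) := by
        have := f.integrable ((volume : Measure (Ω n)).map (X n))
        exact this.comp_measurable (hX n)
      have hm := (hY2 n).sub (hX2 n)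
      have hi : Integrable (fun ω => |Y n ω - X n ω|) (volume : Measure (Ω n)) :=
        (hm.integrable (by norm_num)).abs
      rw [← integral_sub iY iX]
      refine (norm_integral_le_integral_norm _).trans ?_
      have h1 : ∫ ω, ‖F (Y n ω) - F (X n ω)‖ ≤ ∫ ω, (K : ℝ) * |Y n ω - X n ω| := by
        refine integral_mono (iY.sub iX).norm (hi.const_mul _) (fun ω => ?_)
        have := hK.dist_le_mul (Y n ω) (X n ω)
        rwa [Real.dist_eq, Real.dist_eq] at this
      refine h1.trans ?_
      rw [integral_const_mul]
      exact mul_le_mul_of_nonneg_left (hj_abs_le _ hm) K.2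
    have := hd.add hf
    rw [zero_add] at this
    refine this.congr (fun n => ?_)
    change _ = ∫ x, F x ∂((volume : Measure (Ω n)).map (Y n))
    rw [integral_map (hY n).aemeasurable hK.continuous.aestronglyMeasurable]
    change (∫ ω, F (Y n ω)) - (∫ ω, F (X n ω)) + (∫ ω, F (X n ω)) = _
    ring
  rw [ProbabilityMeasure.tendsto_iff_forall_integral_tendsto] at key
  intro f
  refine (key f).congr (fun n => ?_)
  change ∫ x, f x ∂((volume : Measure (Ω n)).map (Y n)) = _
  rw [integral_map (hY n).aemeasurable f.continuous.aestronglyMeasurable]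

lemma hj_quad {Ω : Type} [MeasureSpace Ω]
    (U V : Ω → ℝ) (hU : MemLp U 2 (volume : Measure Ω)) (hV : MemLp V 2 (volume : Measure Ω))
    (p q : ℝ) : ∫ ω, (p * U ω - q * V ω) ^ 2 =
      p ^ 2 * (∫ ω, U ω ^ 2) - 2 * p * q * (∫ ω, U ω * V ω) + q ^ 2 * ∫ ω, V ω ^ 2 := by
  have h1 := (hU.integrable_sq).const_mul (p ^ 2)
  have h2 := (hV.integrable_sq).const_mul (q ^ 2)
  have h3 : Integrable (fun ω => 2 * p * q * (U ω * V ω)) (volume : Measure Ω) :=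
    (hU.integrable_mul hV).const_mul (2 * p * q)
  have h4 : Integrable (fun ω => p ^ 2 * U ω ^ 2 - 2 * p * q * (U ω * V ω)) (volume : Measure Ω) :=
    h1.sub h3
  rw [← integral_const_mul, ← integral_const_mul, ← integral_const_mul, ← integral_sub h1 h3,
    ← integral_add h4 h2]
  congr 1
  ext ω
  ring

/-- One-space estimates. -/
lemma hj_est {Ω : Type} [MeasureSpace Ω] [IsProbabilityMeasure (volume : Measure Ω)]
    (T S : Ω → ℝ) (hT : MemLp T 2 (volume : Measure Ω)) (hS : MemLp S 2 (volume : Measure Ω))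
    (hv : 0 < var T) :
    (Real.sqrt (var S) / Real.sqrt (var T) - 1) ^ 2 ≤ (∫ ω, (T ω - S ω) ^ 2) / var T ∧
    (0 < var S →
      ∫ ω, ((S ω - ∫ ω', S ω') / Real.sqrt (var S) - (T ω - ∫ ω', T ω') / Real.sqrt (var T)) ^ 2
        ≤ ((∫ ω, (T ω - S ω) ^ 2) / var T) * (Real.sqrt (var T) / Real.sqrt (var S))) := by
  set mT := ∫ ω', T ω' with hmT
  set mS := ∫ ω', S ω' with hmS
  have hU : MemLp (fun ω => T ω - mT) 2 (volume : Measure Ω) := hT.sub (memLp_const mT)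
  have hV : MemLp (fun ω => S ω - mS) 2 (volume : Measure Ω) := hS.sub (memLp_const mS)
  have hq := hj_quad _ _ hU hV
  have ha : ∫ ω, (T ω - mT) ^ 2 = var T := rfl
  have hb : ∫ ω, (S ω - mS) ^ 2 = var S := rfl
  rw [ha, hb] at hq
  have hb0 : 0 ≤ var S := integral_nonneg (fun ω => sq_nonneg _)
  set a := var T
  set b := var S
  set c := ∫ ω, (T ω - mT) * (S ω - mS)
  set e := ∫ ω, (T ω - S ω) ^ 2
  have he : a + b - 2 * c ≤ e := by
    have h1 := hq 1 1
    have h2 := variance_le_expectation_sq (μ := (volume : Measure Ω)) (X := T - S)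
      (hT.sub hS).aestronglyMeasurable
    rw [variance_eq_integral (hT.sub hS).aemeasurable] at h2
    have h3 : ∫ ω, (T - S) ω = mT - mS :=
      integral_sub (hT.integrable (by norm_num)) (hS.integrable (by norm_num))
    rw [h3] at h2
    have h4 : ∫ ω, (1 * (T ω - mT) - 1 * (S ω - mS)) ^ 2 = ∫ ω, ((T - S) ω - (mT - mS)) ^ 2 := by
      congr 1
      ext ω
      simp only [Pi.sub_apply]
      ring
    rw [h4] at h1
    have h5 : ∫ ω, ((T - S) ^ 2) ω = e := rfl
    rw [h5] at h2
    linarith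
  have hcs : c ^ 2 ≤ a * b := by
    have h1 := hq c a
    have h0 : 0 ≤ ∫ ω, (c * (T ω - mT) - a * (S ω - mS)) ^ 2 :=
      integral_nonneg (fun ω => sq_nonneg _)
    have : 0 ≤ a * (a * b - c ^ 2) := by
      rw [h1] at h0
      linarith
    have := nonneg_of_mul_nonneg_right this hv
    linarith
  have ht : 0 < Real.sqrt a := Real.sqrt_pos.2 hv
  have hs : 0 ≤ Real.sqrt b := Real.sqrt_nonneg _
  have hta : Real.sqrt a ^ 2 = a := Real.sq_sqrt hv.le
  have hsb : Real.sqrt b ^ 2 = b := Real.sq_sqrt hb0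
  have hc : c ≤ Real.sqrt a * Real.sqrt b := by
    apply le_of_sq_le_sq _ (by positivity)
    rw [mul_pow, hta, hsb]
    exact hcs
  set t := Real.sqrt a
  set s := Real.sqrt b
  rw [← hta, ← hsb] at he
  constructor
  · rw [← hta, le_div_iff₀ (by positivity)]
    have : (s / t - 1) ^ 2 * t ^ 2 = (s - t) ^ 2 := by
      field_simp
    rw [this]
    nlinarith
  · intro hbp
    have hsp : 0 < s := Real.sqrt_pos.2 hbp
    have h1 := hq (1 / t) (1 / s)
    have h2 : ∫ ω, ((S ω - mS) / s - (T ω - mT) / t) ^ 2 =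
        ∫ ω, (1 / t * (T ω - mT) - 1 / s * (S ω - mS)) ^ 2 := by
      congr 1
      ext ω
      ring
    rw [h2, h1, ← hta, ← hsb]
    have h3 : (1 / t) ^ 2 * t ^ 2 - 2 * (1 / t) * (1 / s) * c + (1 / s) ^ 2 * s ^ 2 =
        (2 * (t * s) - 2 * c) / (t * s) := by
      field_simp
      ring
    have h4 : e / t ^ 2 * (t / s) = e / (t * s) := by
      field_simp
    rw [h3, h4]
    apply div_le_div_of_nonneg_right _ (by positivity)
    nlinarith [sq_nonneg (t - s)]

/-- **Hájek's lemma.** Let `(T_n)`, `(S_n)` be sequences of square-integrable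
real random variables (each pair on a common probability space) with `Var(T_n) > 0`. If the
standardization of `T_n` converges in distribution to a law `L` and
`E[(T_n − S_n)²]/Var(T_n) → 0`, then `Var(T_n)/Var(S_n) → 1` (in particular `Var(S_n) > 0`
for all sufficiently large `n`) and the standardization of `S_n` also converges in
distribution to `L`. Convergence in distribution is expressed via bounded continuous test
functions. -/
theorem hajek_lemma
    (Ω : ℕ → Type) [∀ n, MeasureSpace (Ω n)]
    [∀ n, IsProbabilityMeasure (volume : Measure (Ω n))]
    (T S : ∀ n, Ω n → ℝ)
    (hTmeas : ∀ n, Measurable (T n)) (hSmeas : ∀ n, Measurable (S n))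
    (hT2 : ∀ n, MemLp (T n) 2 (volume : Measure (Ω n)))
    (hS2 : ∀ n, MemLp (S n) 2 (volume : Measure (Ω n)))
    (hvarT : ∀ n, 0 < var (T n))
    (L : Measure ℝ) [IsProbabilityMeasure L]
    (hconv : ∀ f : BoundedContinuousFunction ℝ ℝ,
      Tendsto (fun n => ∫ ω, f ((T n ω - ∫ ω', T n ω') / Real.sqrt (var (T n))))
        atTop (𝓝 (∫ x, f x ∂L)))
    (hdiff : Tendsto (fun n => (∫ ω, (T n ω - S n ω) ^ 2) / var (T n)) atTop (𝓝 0)) :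
    Tendsto (fun n => var (T n) / var (S n)) atTop (𝓝 1) ∧
    (∀ᶠ n in atTop, 0 < var (S n)) ∧
    ∀ f : BoundedContinuousFunction ℝ ℝ,
      Tendsto (fun n => ∫ ω, f ((S n ω - ∫ ω', S n ω') / Real.sqrt (var (S n))))
        atTop (𝓝 (∫ x, f x ∂L)) := by
  have hest := fun n => hj_est (T n) (S n) (hT2 n) (hS2 n) (hvarT n)
  set δ : ℕ → ℝ := fun n => (∫ ω, (T n ω - S n ω) ^ 2) / var (T n) with hδ
  have hr : Tendsto (fun n => Real.sqrt (var (S n)) / Real.sqrt (var (T n))) atTop (𝓝 1) := by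
    have h0 : Tendsto (fun n => Real.sqrt (var (S n)) / Real.sqrt (var (T n)) - 1)
        atTop (𝓝 0) := by
      have h1 : Tendsto (fun n => Real.sqrt (δ n)) atTop (𝓝 0) := by
        simpa using hdiff.sqrt
      exact squeeze_zero_norm (fun n => Real.abs_le_sqrt (hest n).1) h1
    simpa using h0.add_const 1
  have hpos : ∀ᶠ n in atTop, 0 < var (S n) := by
    filter_upwards [hr.eventually_const_lt zero_lt_one] with n hn
    by_contra hcon
    rw [Real.sqrt_eq_zero_of_nonpos (not_lt.1 hcon)] at hn
    simp at hn
  have hri : Tendsto (fun n => Real.sqrt (var (T n)) / Real.sqrt (var (S n))) atTop (𝓝 1) := by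
    have := hr.inv₀ one_ne_zero
    simpa using this
  refine ⟨?_, hpos, ?_⟩
  · have := hri.pow 2
    rw [one_pow] at this
    refine this.congr' ?_
    filter_upwards [hpos] with n hn
    rw [div_pow, Real.sq_sqrt (hvarT n).le, Real.sq_sqrt hn.le]
  · have hm : ∀ (U : ∀ n, Ω n → ℝ), (∀ n, MemLp (U n) 2 (volume : Measure (Ω n))) → ∀ n,
        MemLp (fun ω => (U n ω - ∫ ω', U n ω') / Real.sqrt (var (U n))) 2
          (volume : Measure (Ω n)) := by
      intro U hU n
      simp only [div_eq_mul_inv]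
      exact ((hU n).sub (memLp_const _)).mul_const _
    refine hj_conv Ω _ (fun n ω => (S n ω - ∫ ω', S n ω') / Real.sqrt (var (S n)))
      (fun n => ((hTmeas n).sub_const _).div_const _)
      (fun n => ((hSmeas n).sub_const _).div_const _) (hm T hT2) (hm S hS2) L hconv ?_
    have hb : Tendsto (fun n => δ n * (Real.sqrt (var (T n)) / Real.sqrt (var (S n))))
        atTop (𝓝 0) := by
      simpa using hdiff.mul hri
    refine tendsto_of_tendsto_of_tendsto_of_le_of_le' tendsto_const_nhds hb ?_ ?_
    · exact Eventually.of_forall (fun n => integral_nonneg (fun ω => sq_nonneg _))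
    · filter_upwards [hpos] with n hn using (hest n).2 hn

end
end

section
/- (Decomposition of the one-step PGD-Gauss solution.) Fix K ≥ 2 and an arm k with f_k smooth at 0. Consider a sequence of covariate matrices X⁽ⁿ⁾ ∈ ℝ^{n×d_n} with unit-norm rows and step sizes η_n > 0 with η_n ‖X⁽ⁿ⁾X⁽ⁿ⁾ᵀ − I_n‖_op → 0, and let Σ_{η_n} be the one-step PGD-Gauss solution. Then Σ_{η_n} = I_n + η_n N_n where N_n is a symmetric matrix with all diagonal entries equal to zero, and there exists a constant C such that for all sufficiently large n, ‖N_n‖_op ≤ C(‖X⁽ⁿ⁾X⁽ⁿ⁾ᵀ − I_n‖_op + η_n ‖X⁽ⁿ⁾X⁽ⁿ⁾ᵀ − I_n‖_op²). -/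
open MeasureTheory ProbabilityTheory Matrix Real Filter
open scoped BigOperators ENNReal NNReal Topology

noncomputable section

/-- The one-step PGD-Gauss solution `Σ_η = D⁻¹ U² D⁻¹`, where
`U = I − η c (XXᵀ − I)` with `c = f_k′(0)` and `D` is the diagonal matrix whose `i`-th
diagonal entry is the Euclidean norm of the `i`-th row of `U`. -/
def pgd {n d : ℕ} (X : Matrix (Fin n) (Fin d) ℝ) (η c : ℝ) : Matrix (Fin n) (Fin n) ℝ :=
  let U : Matrix (Fin n) (Fin n) ℝ := 1 - (η * c) • (X * Xᵀ - 1)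
  Matrix.of fun i j =>
    (U * U) i j / (Real.sqrt (∑ l, U i l ^ 2) * Real.sqrt (∑ l, U j l ^ 2))

open scoped Matrix.Norms.L2Operator in
lemma abs_entry_le {m : ℕ} (M : Matrix (Fin m) (Fin m) ℝ) (i : Fin m) : |M i i| ≤ ‖M‖ := by
  have h1 := (Matrix.toEuclideanCLM (𝕜 := ℝ) M).le_opNorm (EuclideanSpace.single i (1 : ℝ))
  have h2 := PiLp.norm_apply_le
    (Matrix.toEuclideanCLM (𝕜 := ℝ) M (EuclideanSpace.single i (1 : ℝ))) i
  have h3 : (Matrix.toEuclideanCLM (𝕜 := ℝ) M (EuclideanSpace.single i (1 : ℝ))) i = M i i := by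
    simp [Matrix.ofLp_toEuclideanCLM]
  rw [h3, Real.norm_eq_abs] at h2
  rw [Matrix.l2_opNorm_toEuclideanCLM] at h1
  simp only [EuclideanSpace.norm_single, norm_one, mul_one] at h1
  exact h2.trans h1

lemma gram_symm {n d : ℕ} (X : Matrix (Fin n) (Fin d) ℝ) : (X * Xᵀ - 1)ᵀ = X * Xᵀ - 1 := by
  simp [Matrix.transpose_sub, Matrix.transpose_mul]

lemma gram_diag {n d : ℕ} (X : Matrix (Fin n) (Fin d) ℝ) (hX : ∀ i, ∑ j, X i j ^ 2 = 1)
    (i : Fin n) : (X * Xᵀ - 1 : Matrix (Fin n) (Fin n) ℝ) i i = 0 := by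
  have := hX i
  simp only [Matrix.sub_apply, Matrix.mul_apply, Matrix.transpose_apply, Matrix.one_apply_eq]
  simp only [← pow_two, this, sub_self]

lemma pgd_formula {n : ℕ} (A U : Matrix (Fin n) (Fin n) ℝ) (t : ℝ) (hA : Aᵀ = A)
    (hd : ∀ i, A i i = 0) (hU : U = 1 - t • A) :
    (∀ i, 1 ≤ Real.sqrt (∑ l, U i l ^ 2)) ∧
    (Matrix.of fun i j =>
      (U * U) i j / (Real.sqrt (∑ l, U i l ^ 2) * Real.sqrt (∑ l, U j l ^ 2))) - 1 =
    diagonal (fun i => (Real.sqrt (∑ l, U i l ^ 2))⁻¹) *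
      ((-(2 * t)) • A + t ^ 2 • (A * A - diagonal (A * A).diag)) *
      diagonal (fun i => (Real.sqrt (∑ l, U i l ^ 2))⁻¹) := by
  have hUs : Uᵀ = U := by rw [hU]; simp [hA]
  have hs : ∀ i, 1 ≤ Real.sqrt (∑ l, U i l ^ 2) := by
    intro i
    rw [Real.one_le_sqrt]
    have h1 : U i i = 1 := by rw [hU]; simp [hd i]
    calc (1 : ℝ) = U i i ^ 2 := by rw [h1]; norm_num
      _ ≤ _ := Finset.single_le_sum (f := fun l => U i l ^ 2) (fun l _ => sq_nonneg _)
        (Finset.mem_univ i)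
  refine ⟨hs, ?_⟩
  have hUU : U * U = 1 + ((-(2 * t)) • A + t ^ 2 • (A * A)) := by
    rw [hU]
    simp only [sub_mul, mul_sub, one_mul, mul_one, smul_mul_assoc, mul_smul_comm, smul_smul]
    module
  have hdd : ∀ i, (U * U) i i = Real.sqrt (∑ l, U i l ^ 2) * Real.sqrt (∑ l, U i l ^ 2) := by
    intro i
    rw [Real.mul_self_sqrt (Finset.sum_nonneg fun l _ => sq_nonneg _), Matrix.mul_apply]
    refine Finset.sum_congr rfl fun l _ => ?_
    have : U l i = U i l := by rw [← Matrix.transpose_apply U, hUs]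
    rw [this, pow_two]
  ext i j
  rw [Matrix.mul_diagonal, Matrix.diagonal_mul, Matrix.sub_apply, Matrix.of_apply]
  have hi : Real.sqrt (∑ l, U i l ^ 2) ≠ 0 := (zero_lt_one.trans_le (hs i)).ne'
  have hj : Real.sqrt (∑ l, U j l ^ 2) ≠ 0 := (zero_lt_one.trans_le (hs j)).ne'
  by_cases hij : i = j
  · subst hij
    rw [hdd, div_self (mul_ne_zero hi hi)]
    simp [hd i]
  · rw [hUU]
    simp only [Matrix.add_apply, Matrix.smul_apply, Matrix.sub_apply, Matrix.one_apply_ne hij,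
      Matrix.diagonal_apply_ne _ hij, smul_eq_mul]
    field_simp
    ring

open scoped Matrix.Norms.L2Operator in
lemma norm_bound {n : ℕ} (A : Matrix (Fin n) (Fin n) ℝ) (v : Fin n → ℝ) (t : ℝ)
    (hv : ∀ i, |v i| ≤ 1) :
    ‖diagonal v * ((-(2 * t)) • A + t ^ 2 • (A * A - diagonal (A * A).diag)) * diagonal v‖ ≤
      2 * |t| * ‖A‖ + 2 * t ^ 2 * ‖A‖ ^ 2 := by
  have hD : ‖(diagonal v : Matrix (Fin n) (Fin n) ℝ)‖ ≤ 1 := by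
    rw [Matrix.l2_opNorm_diagonal]
    exact (pi_norm_le_iff_of_nonneg zero_le_one).2 hv
  have hAA : ‖A * A‖ ≤ ‖A‖ ^ 2 := by rw [pow_two]; exact Matrix.l2_opNorm_mul A A
  have hE : ‖(diagonal (A * A).diag : Matrix (Fin n) (Fin n) ℝ)‖ ≤ ‖A‖ ^ 2 := by
    rw [Matrix.l2_opNorm_diagonal]
    exact (pi_norm_le_iff_of_nonneg (sq_nonneg _)).2 fun i => (abs_entry_le (A * A) i).trans hAA
  set E := (diagonal (A * A).diag : Matrix (Fin n) (Fin n) ℝ)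
  set B := (-(2 * t)) • A + t ^ 2 • (A * A - E) with hB
  have hBn : ‖B‖ ≤ 2 * |t| * ‖A‖ + 2 * t ^ 2 * ‖A‖ ^ 2 := by
    calc ‖B‖ ≤ ‖(-(2 * t)) • A‖ + ‖t ^ 2 • (A * A - E)‖ := norm_add_le _ _
      _ = 2 * |t| * ‖A‖ + t ^ 2 * ‖A * A - E‖ := by
        rw [norm_smul, norm_smul]; simp [abs_mul]
      _ ≤ 2 * |t| * ‖A‖ + t ^ 2 * (‖A‖ ^ 2 + ‖A‖ ^ 2) := by
        gcongr
        exact (norm_sub_le _ _).trans (add_le_add hAA hE)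
      _ = _ := by ring
  calc ‖diagonal v * B * diagonal v‖ ≤ ‖diagonal v * B‖ * ‖(diagonal v : Matrix (Fin n) (Fin n) ℝ)‖ :=
        Matrix.l2_opNorm_mul _ _
    _ ≤ ‖diagonal v * B‖ * 1 := by gcongr
    _ ≤ ‖(diagonal v : Matrix (Fin n) (Fin n) ℝ)‖ * ‖B‖ := by
      rw [mul_one]; exact Matrix.l2_opNorm_mul _ _
    _ ≤ 1 * ‖B‖ := by gcongr
    _ ≤ _ := by rw [one_mul]; exact hBn

open scoped Matrix.Norms.L2Operator in
lemma opNorm_eq {m : ℕ} (A : Matrix (Fin m) (Fin m) ℝ) : opNorm A = ‖A‖ := rfl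

open scoped Matrix.Norms.L2Operator in
lemma pgd_main {n d : ℕ} (X : Matrix (Fin n) (Fin d) ℝ) (hX : ∀ i, ∑ j, X i j ^ 2 = 1)
    (η c : ℝ) (hη : 0 < η) :
    ∃ N : Matrix (Fin n) (Fin n) ℝ, (pgd X η c = 1 + η • N ∧ N.IsSymm ∧ ∀ i, N i i = 0) ∧
      opNorm N ≤ (2 * |c| + 2 * c ^ 2) *
        (opNorm (X * Xᵀ - 1) + η * opNorm (X * Xᵀ - 1) ^ 2) := by
  have hA := gram_symm X
  have hd := gram_diag X hX
  obtain ⟨hs, hf⟩ := pgd_formula (X * Xᵀ - 1) _ (η * c) hA hd rfl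
  change pgd X η c - 1 = _ at hf
  set A := X * Xᵀ - 1 with hAdef
  have hv : ∀ i, |(Real.sqrt (∑ l, (1 - (η * c) • A) i l ^ 2))⁻¹| ≤ 1 := fun i => by
    rw [abs_of_nonneg (inv_nonneg.2 (Real.sqrt_nonneg _))]
    exact inv_le_one_of_one_le₀ (hs i)
  have hb := norm_bound A _ (η * c) hv
  rw [← hf] at hb
  refine ⟨η⁻¹ • (pgd X η c - 1), ⟨?_, ?_, ?_⟩, ?_⟩
  · rw [smul_smul, mul_inv_cancel₀ hη.ne', one_smul]; abel
  · rw [hf]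
    simp [Matrix.IsSymm, Matrix.transpose_mul, hA, Matrix.mul_assoc]
  · intro i
    rw [hf, Matrix.smul_apply, Matrix.mul_diagonal, Matrix.diagonal_mul]
    simp [hd i]
  · rw [opNorm_eq, opNorm_eq, norm_smul, Real.norm_eq_abs, abs_of_pos (inv_pos.2 hη)]
    have ha := norm_nonneg A
    calc η⁻¹ * ‖pgd X η c - 1‖
        ≤ η⁻¹ * (2 * |η * c| * ‖A‖ + 2 * (η * c) ^ 2 * ‖A‖ ^ 2) := by gcongr
      _ = 2 * |c| * ‖A‖ + 2 * c ^ 2 * (η * ‖A‖ ^ 2) := by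
        rw [abs_mul, abs_of_pos hη]; field_simp
      _ ≤ _ := by
        have h1 : 0 ≤ 2 * |c| * (η * ‖A‖ ^ 2) := by positivity
        have h2 : 0 ≤ 2 * c ^ 2 * ‖A‖ := by positivity
        nlinarith

/-- **Decomposition of the one-step PGD-Gauss solution.** Under unit-norm rows
and `η_n ‖X⁽ⁿ⁾X⁽ⁿ⁾ᵀ − I‖_op → 0`, the one-step PGD-Gauss solution satisfies
`Σ_{η_n} = I + η_n N_n` where `N_n` is symmetric with zero diagonal and, for some constant
`C` and all sufficiently large `n`,
`‖N_n‖_op ≤ C (‖XXᵀ − I‖_op + η_n ‖XXᵀ − I‖_op²)`. -/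
theorem pgd_decomposition
    (K : ℕ) (hK : 2 ≤ K) (k : Fin K)
    (q : ℕ → ℝ) (hq : ∀ m : ℕ, 0 < m → m < K → stdGaussianCDF (q m) = (m : ℝ) / K)
    (d : ℕ → ℕ) (X : ∀ nn : ℕ, Matrix (Fin nn) (Fin (d nn)) ℝ)
    (hX : ∀ nn (i : Fin nn), ∑ j, X nn i j ^ 2 = 1)
    (η : ℕ → ℝ) (hη : ∀ nn, 0 < η nn)
    (hηop : Tendsto (fun nn => η nn * opNorm (X nn * (X nn)ᵀ - 1)) atTop (𝓝 0)) :
    ∃ N : ∀ nn : ℕ, Matrix (Fin nn) (Fin nn) ℝ,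
      (∀ nn, pgd (X nn) (η nn) (deriv (fkfun q K k) 0) = 1 + η nn • N nn ∧
        (N nn).IsSymm ∧ ∀ i, N nn i i = 0) ∧
      ∃ C : ℝ, ∀ᶠ nn in atTop,
        opNorm (N nn) ≤
          C * (opNorm (X nn * (X nn)ᵀ - 1) + η nn * opNorm (X nn * (X nn)ᵀ - 1) ^ 2) := by
  have h := fun nn => pgd_main (X nn) (hX nn) (η nn) (deriv (fkfun q K k) 0) (hη nn)
  choose N hN hb using h
  exact ⟨N, hN, _, Eventually.of_forall hb⟩

end
end
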